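/- arXiv:1501.01489 — 2 statements merged into one kernel-verified Lean document; each statement's English description precedes it below -/
import Mathlib

section
/- Let S_n denote the number of single-chord strong components (strong components of size 1) in the directed intersection graph of the random oriented chord diagram D_n. Then S_n converges in distribution, as n→∞, to a Poisson random variable with mean 3; that is, for every integer m ≥ 0, lim_{n→∞} P(S_n = m) = e^{−3} 3^m / m!. Moreover, with high probability all strong components other than the single-chord ones form exactly one strong component (the giant component). -/
open scoped Classical
open Finset Filter

/-- A chord diagram of size `n`: a fixed-point-free involution of the `2n`
endpoints `0, 1, …, 2n-1` (endpoint `i` here corresponds to the label `i+1`). -/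
abbrev ChordDiagram (n : ℕ) :=
  {f : Fin (2*n) → Fin (2*n) // (∀ i, f (f i) = i) ∧ ∀ i, f i ≠ i}

/-- `c` lies strictly between `a` and `b`. -/
def Between {m : ℕ} (a b c : Fin m) : Prop := min a b < c ∧ c < max a b

/-- The chord of `C` containing endpoint `x` crosses the chord containing endpoint `u`:
exactly one of the two endpoints `u`, `C u` lies strictly between `x` and `C x`. -/
def Crosses {n : ℕ} (C : ChordDiagram n) (x u : Fin (2*n)) : Prop :=
  Xor' (Between x (C.1 x) u) (Between x (C.1 x) (C.1 u))

/-- Uniform probability of an event over all chord diagrams of size `n`. -/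
noncomputable def prob (n : ℕ) (E : ChordDiagram n → Prop) : ℝ :=
  ((Finset.univ.filter E).card : ℝ) / ((Finset.univ : Finset (ChordDiagram n)).card : ℝ)

/-- The degree of the chord of `C` containing endpoint `x`: the number of chords
crossing it (each chord counted once via its smaller endpoint). -/
noncomputable def chordDegree {n : ℕ} (C : ChordDiagram n) (x : Fin (2*n)) : ℕ :=
  (Finset.univ.filter fun u => u < C.1 u ∧ Crosses C x u).card

/-- The length of the chord of `C` containing endpoint `x`: the number of endpoints
on the smaller of the two arcs it determines. -/
def chordLength {n : ℕ} (C : ChordDiagram n) (x : Fin (2*n)) : ℕ :=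
  min (max (x:ℕ) (C.1 x : ℕ) - min (x:ℕ) (C.1 x : ℕ) - 1)
      (2*n - (max (x:ℕ) (C.1 x : ℕ) - min (x:ℕ) (C.1 x : ℕ)) - 1)

/-- Degree of the chord containing endpoint `1` (index `0`). -/
noncomputable def degreeC1 (n : ℕ) (C : ChordDiagram n) : ℕ :=
  if h : 0 < n then chordDegree C ⟨0, by omega⟩ else 0

/-- Length of the chord containing endpoint `1` (index `0`). -/
noncomputable def lengthC1 (n : ℕ) (C : ChordDiagram n) : ℕ :=
  if h : 0 < n then chordLength C ⟨0, by omega⟩ else 0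

/-- Membership in the component (w.r.t. the crossing relation) of the chord
containing the root endpoint. -/
def InRootComponent {n : ℕ} (C : ChordDiagram n) (root x : Fin (2*n)) : Prop :=
  x = root ∨ x = C.1 root ∨ Relation.ReflTransGen (fun a b => Crosses C a b) root x

/-- The chord containing `x` is simple: it joins two (cyclically) consecutive endpoints. -/
def IsSimple {n : ℕ} (C : ChordDiagram n) (x : Fin (2*n)) : Prop :=
  (C.1 x : ℕ) = ((x : ℕ) + 1) % (2*n) ∨ (x : ℕ) = ((C.1 x : ℕ) + 1) % (2*n)

/-- `C` is monolithic (with respect to `root`): every chord not in the root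
component is simple, and no two simple chords are next to each other. -/
def Monolithic {n : ℕ} (C : ChordDiagram n) (root : Fin (2*n)) : Prop :=
  (∀ x : Fin (2*n), ¬ InRootComponent C root x → IsSimple C x) ∧
  ¬ ∃ i : Fin (2*n), (C.1 i : ℕ) = ((i : ℕ) + 1) % (2*n) ∧
      ∃ j : Fin (2*n), (j : ℕ) = ((i : ℕ) + 2) % (2*n) ∧ (C.1 j : ℕ) = ((i : ℕ) + 3) % (2*n)

/-- `L_j`: the number of chords of length `j` in `C`. -/
noncomputable def lengthCount (n : ℕ) (j : ℕ) (C : ChordDiagram n) : ℕ :=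
  (Finset.univ.filter fun x : Fin (2*n) => x < C.1 x ∧ chordLength C x = j).card

/-- The endpoints of chords of `C` of length at least `k`. -/
noncomputable def lenAtLeast (n k : ℕ) (C : ChordDiagram n) : Finset (Fin (2*n)) :=
  Finset.univ.filter fun x => k ≤ chordLength C x

/-- The number of chords with endpoints in `S` crossing the chord containing `x`. -/
noncomputable def degreeIn {n : ℕ} (C : ChordDiagram n) (S : Finset (Fin (2*n)))
    (x : Fin (2*n)) : ℕ :=
  (S.filter fun u => u < C.1 u ∧ Crosses C x u).card

/-- `S` (a chord-closed set of endpoints) is a set of chords each crossing at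
least `k` other chords of `S`. -/
def IsCore {n : ℕ} (C : ChordDiagram n) (k : ℕ) (S : Finset (Fin (2*n))) : Prop :=
  (∀ x ∈ S, C.1 x ∈ S) ∧ ∀ x ∈ S, k ≤ degreeIn C S x

/-- The `k`-core: the union of all sets of chords in which every chord crosses
at least `k` other chords of the set. -/
noncomputable def kCore (n k : ℕ) (C : ChordDiagram n) : Finset (Fin (2*n)) :=
  Finset.univ.filter fun x => ∃ S : Finset (Fin (2*n)), IsCore C k S ∧ x ∈ S

/-- The number of chords in the `k`-core of `C`. -/
noncomputable def kCoreSize (n k : ℕ) (C : ChordDiagram n) : ℕ :=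
  ((kCore n k C).filter fun x => x < C.1 x).card

/-- `Z_k`: the number of chords of length strictly less than `k`. -/
noncomputable def shortCount (n k : ℕ) (C : ChordDiagram n) : ℕ :=
  (Finset.univ.filter fun x : Fin (2*n) => x < C.1 x ∧ chordLength C x < k).card

/-- `C` contains a balanced clique of size `m`: a set of `m` pairwise crossing
chords with exactly one endpoint in each of the `2m` blocks of length `⌊n/m⌋`. -/
def HasBalancedClique (n m : ℕ) (C : ChordDiagram n) : Prop :=
  ∃ S : Finset (Fin (2*n)),
    (∀ x ∈ S, C.1 x ∈ S) ∧
    (∀ x ∈ S, ∀ u ∈ S, u ≠ x → u ≠ C.1 x → Crosses C x u) ∧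
    (∀ t : ℕ, 1 ≤ t → t ≤ 2*m →
      (S.filter fun x => (t-1) * (n/m) ≤ (x:ℕ) ∧ (x:ℕ) < t * (n/m)).card = 1)

/-- An oriented chord diagram: a chord diagram together with auxiliary fair-coin
bits; the bit attached to a crossing pair of chords (indexed by their smaller
endpoints) decides which chord over-crosses the other. -/
abbrev OrientedChordDiagram (n : ℕ) := ChordDiagram n × (Fin (2*n) → Fin (2*n) → Bool)

/-- The smaller endpoint of the chord of `C` containing `x`. -/
def chordRep {n : ℕ} (C : ChordDiagram n) (x : Fin (2*n)) : Fin (2*n) := min x (C.1 x)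

/-- In the oriented diagram `D`, the chord containing `x` crosses and
over-crosses the chord containing `u`. -/
def OverD {n : ℕ} (D : OrientedChordDiagram n) (x u : Fin (2*n)) : Prop :=
  Crosses D.1 x u ∧
    ((chordRep D.1 x ≤ chordRep D.1 u ∧ D.2 (chordRep D.1 x) (chordRep D.1 u) = true) ∨
     (chordRep D.1 u < chordRep D.1 x ∧ D.2 (chordRep D.1 u) (chordRep D.1 x) = false))

/-- Uniform probability of an event over all oriented chord diagrams of size `n`
(this yields a uniformly random diagram with each crossing oriented by an
independent fair coin). -/
noncomputable def probD (n : ℕ) (E : OrientedChordDiagram n → Prop) : ℝ :=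
  ((Finset.univ.filter E).card : ℝ) /
    ((Finset.univ : Finset (OrientedChordDiagram n)).card : ℝ)

/-- The chords (given by their endpoints in `S`) are strongly connected in the
directed intersection graph of `D`, using only chords of `S`. -/
def StronglyConnectedIn {n : ℕ} (D : OrientedChordDiagram n) (S : Set (Fin (2*n))) : Prop :=
  ∀ c ∈ S, ∀ d ∈ S,
    Relation.ReflTransGen (fun a b => a ∈ S ∧ b ∈ S ∧ OverD D a b) c d

/-- The number of chords with both endpoints in the cyclic block
`{i, i+1, …, i+t-1}` (mod `2n`). -/
noncomputable def chordsInBlock (n : ℕ) (C : ChordDiagram n) (i t : ℕ) : ℕ :=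
  (Finset.univ.filter fun x : Fin (2*n) => x < C.1 x ∧
    (∃ a < t, (x:ℕ) = (i + a) % (2*n)) ∧ (∃ a < t, ((C.1 x : ℕ)) = (i + a) % (2*n))).card

/-- The chord of `x` reaches the chord of `u` in the directed intersection graph
(of the whole diagram); endpoints of the same chord represent the same vertex. -/
def ReachChord {n : ℕ} (D : OrientedChordDiagram n) (x u : Fin (2*n)) : Prop :=
  u = x ∨ u = D.1.1 x ∨ Relation.ReflTransGen (fun a b => OverD D a b) x u

/-- The chords of `x` and `u` lie in the same strong component. -/
def MutualReach {n : ℕ} (D : OrientedChordDiagram n) (x u : Fin (2*n)) : Prop :=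
  ReachChord D x u ∧ ReachChord D u x

/-- The number of single-chord strong components of `D`. -/
noncomputable def singleCount (n : ℕ) (D : OrientedChordDiagram n) : ℕ :=
  (Finset.univ.filter fun x : Fin (2*n) =>
    x < D.1.1 x ∧ ∀ u : Fin (2*n), u ≠ x → u ≠ D.1.1 x → ¬ MutualReach D x u).card

/-!
A chord with `c` distinct chords crossing it lies over all of them or under all of them with
probability `1` if `c = 0` and `2 * 2⁻ᶜ` otherwise, and such an extreme chord is a strong component
on its own. There are asymptotically Poisson(1) many chords joining a point to the one at distance
`c + 1`, and for bounded `c` they behave independently, so the number of extreme chords with `c < K`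
is asymptotically Poisson with mean `∑ c < K, extremeProb c`, which tends to `1 + 2 = 3` as
`K → ∞`. This is proved by the method of factorial moments.

Nothing else produces small components. A chord of length `ℓ` and the root chord, which whp has
length of order `n`, are both crossed by order `ℓ` chords, each of which is the middle of a directed
path from one to the other with probability `1 / 4`. Hence they are mutually reachable except with
probability exponentially small in `ℓ`, and the expected number of chords longer than `K` for which
this fails is, up to `o(1)`, exponentially small in `K`. Short chords whp cross only
long ones, so a short chord that is not extreme has an edge to and an edge from the giant component.
-/

open scoped BigOperators Topology

/-! ### Uniform probability on a finite type -/

section UnifProb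

variable {Ω : Type*} [Fintype Ω]

/-- The probability of the event `E` when `ω` is uniformly distributed on the finite type `Ω`. -/
noncomputable def unifProb (E : Ω → Prop) : ℝ := 𝔼 ω, if E ω then 1 else 0

lemma unifProb_nonneg (E : Ω → Prop) : 0 ≤ unifProb E :=
  expect_nonneg fun ω _ => by split_ifs <;> norm_num

lemma unifProb_congr {E F : Ω → Prop} (h : ∀ ω, E ω ↔ F ω) : unifProb E = unifProb F :=
  congrArg unifProb (funext fun ω => propext (h ω))

lemma unifProb_mono {E F : Ω → Prop} (h : ∀ ω, E ω → F ω) : unifProb E ≤ unifProb F :=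
  expect_le_expect fun ω _ => by
    by_cases hE : E ω
    · rw [if_pos hE, if_pos (h ω hE)]
    · rw [if_neg hE]
      split_ifs <;> norm_num

lemma unifProb_true [Nonempty Ω] : unifProb (fun _ : Ω => True) = 1 := by
  simp only [unifProb, if_true, Fintype.expect_one]

lemma unifProb_false : unifProb (fun _ : Ω => False) = 0 := by
  simp only [unifProb, if_false, expect_const_zero]

lemma unifProb_const [Nonempty Ω] (p : Prop) [Decidable p] :
    unifProb (fun _ : Ω => p) = if p then 1 else 0 := by
  by_cases h : p <;> simp [h, unifProb_true, unifProb_false]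

lemma unifProb_le_one [Nonempty Ω] (E : Ω → Prop) : unifProb E ≤ 1 :=
  (unifProb_mono fun _ _ => trivial).trans_eq unifProb_true

lemma unifProb_not [Nonempty Ω] (E : Ω → Prop) : unifProb (fun ω => ¬ E ω) = 1 - unifProb E := by
  rw [eq_sub_iff_add_eq, ← unifProb_true (Ω := Ω), unifProb, unifProb, ← expect_add_distrib]
  exact expect_congr rfl fun ω _ => by by_cases hE : E ω <;> simp [hE]

lemma unifProb_exists_le_sum {ι : Type*} (T : Finset ι) (E : ι → Ω → Prop) :
    unifProb (fun ω => ∃ t ∈ T, E t ω) ≤ ∑ t ∈ T, unifProb (E t) := by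
  simp only [unifProb]
  rw [← expect_sum_comm]
  refine expect_le_expect fun ω _ => ?_
  have hnonneg : ∀ t ∈ T, (0 : ℝ) ≤ if E t ω then 1 else 0 := fun t _ => by
    split_ifs <;> norm_num
  split_ifs with h
  · obtain ⟨t, ht, hE⟩ := h
    exact (if_pos hE).ge.trans (single_le_sum hnonneg ht)
  · exact sum_nonneg hnonneg

lemma unifProb_or_le (E F : Ω → Prop) :
    unifProb (fun ω => E ω ∨ F ω) ≤ unifProb E + unifProb F := by
  simp only [unifProb]
  rw [← expect_add_distrib]
  refine expect_le_expect fun ω _ => ?_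
  by_cases hE : E ω <;> by_cases hF : F ω <;> simp [hE, hF]

lemma unifProb_or_of_disjoint {E F : Ω → Prop} (h : ∀ ω, E ω → ¬ F ω) :
    unifProb (fun ω => E ω ∨ F ω) = unifProb E + unifProb F := by
  simp only [unifProb]
  rw [← expect_add_distrib]
  refine expect_congr rfl fun ω _ => ?_
  by_cases hE : E ω
  · simp [hE, h ω hE]
  · simp [hE]

lemma abs_unifProb_sub_le {E F B : Ω → Prop} (h : ∀ ω, ¬ B ω → (E ω ↔ F ω)) :
    |unifProb E - unifProb F| ≤ unifProb B := by
  simp only [unifProb]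
  rw [← expect_sub_distrib]
  refine (abs_expect_le _ _).trans (expect_le_expect fun ω _ => ?_)
  by_cases hB : B ω
  · by_cases hE : E ω <;> by_cases hF : F ω <;> simp [hB, hE, hF]
  · simp [h ω hB, hB]

lemma unifProb_equiv {Ω' : Type*} [Fintype Ω'] (e : Ω ≃ Ω') (E : Ω' → Prop) :
    unifProb (fun ω => E (e ω)) = unifProb E :=
  Fintype.expect_equiv e _ _ fun _ => rfl

lemma unifProb_prod {Ω' : Type*} [Fintype Ω'] (E : Ω × Ω' → Prop) :
    unifProb E = 𝔼 a, unifProb fun b => E (a, b) :=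
  expect_product univ univ _

end UnifProb

/-! ### Independence of coordinates -/

section Coordinates

variable {ι Y : Type*}

lemma dependsOn_forall_mem {κ : Type*} (T : Finset κ) {E : κ → (ι → Y) → Prop} {s : κ → Set ι}
    (hE : ∀ t ∈ T, DependsOn (E t) (s t)) :
    DependsOn (fun ω => ∀ t ∈ T, E t ω) (⋃ t ∈ T, s t) := fun _ _ h =>
  propext <| forall₂_congr fun t ht =>
    (hE t ht fun i hi => h i (Set.mem_biUnion (Finset.mem_coe.2 ht) hi)).to_iff

variable [Fintype ι] [DecidableEq ι] [Fintype Y]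

lemma expect_expect_update (l : ι) (F : (ι → Y) → ℝ) :
    𝔼 s, 𝔼 y, F (Function.update s l y) = 𝔼 s, F s := by
  rcases isEmpty_or_nonempty Y with hY | hY
  · have : IsEmpty (ι → Y) := ⟨fun s => hY.elim (s l)⟩
    simp only [univ_eq_empty, expect_empty]
  have hinv : Function.Involutive
      fun z : (ι → Y) × Y => (Function.update z.1 l z.2, z.1 l) := fun z => by simp
  calc 𝔼 s, 𝔼 y, F (Function.update s l y)
      = 𝔼 z : (ι → Y) × Y, F (Function.update z.1 l z.2) :=
        (expect_product univ univ fun z : (ι → Y) × Y => F (Function.update z.1 l z.2)).symm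
    _ = 𝔼 z : (ι → Y) × Y, F z.1 := Fintype.expect_equiv hinv.toPerm _ _ fun _ => rfl
    _ = 𝔼 s, 𝔼 _y : Y, F s := expect_product univ univ _
    _ = 𝔼 s, F s := by simp only [Fintype.expect_const]

lemma unifProb_le_of_update [Nonempty Y] (l : ι) {E : (ι → Y) → Prop} {c : ℝ}
    (h : ∀ s, unifProb (fun y => E (Function.update s l y)) ≤ c) : unifProb E ≤ c := by
  rw [unifProb, ← expect_expect_update l]
  exact expect_le univ_nonempty fun s _ => h s

/-- Exchanging the coordinates outside `s` between two independent copies of `ω` is measure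
preserving. -/
lemma expect_mul_of_dependsOn {f g : (ι → Y) → ℝ} {s t : Set ι} (hf : DependsOn f s)
    (hg : DependsOn g t) (hst : Disjoint s t) :
    𝔼 ω, f ω * g ω = (𝔼 ω, f ω) * 𝔼 ω, g ω := by
  have hinv : Function.Involutive fun z : (ι → Y) × (ι → Y) =>
      (s.piecewise z.1 z.2, s.piecewise z.2 z.1) := fun z => by
    ext i <;> by_cases hi : i ∈ s <;> simp [hi]
  have hf' : ∀ ω ω', f (s.piecewise ω ω') = f ω := fun ω ω' =>
    hf fun i hi => s.piecewise_eq_of_mem _ _ hi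
  have hg' : ∀ ω ω', g (s.piecewise ω ω') = g ω' := fun ω ω' =>
    hg fun i hi => s.piecewise_eq_of_notMem _ _ (hst.notMem_of_mem_right hi)
  rcases isEmpty_or_nonempty (ι → Y) with h | h
  · simp only [univ_eq_empty, expect_empty, mul_zero]
  calc 𝔼 ω, f ω * g ω = 𝔼 ω, 𝔼 _ω' : ι → Y, f ω * g ω := by simp only [Fintype.expect_const]
    _ = 𝔼 z : (ι → Y) × (ι → Y), f z.1 * g z.1 :=
        (expect_product univ univ fun z : (ι → Y) × (ι → Y) => f z.1 * g z.1).symm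
    _ = 𝔼 z : (ι → Y) × (ι → Y), f z.1 * g z.2 :=
        (Fintype.expect_equiv hinv.toPerm _ _ fun z => by
          simp [Function.Involutive.toPerm, hf', hg']).symm
    _ = 𝔼 ω, 𝔼 ω', f ω * g ω' := expect_product univ univ _
    _ = (𝔼 ω, f ω) * 𝔼 ω, g ω := (Fintype.expect_mul_expect _ _).symm

lemma unifProb_and_of_dependsOn {E F : (ι → Y) → Prop} {s t : Set ι} (hE : DependsOn E s)
    (hF : DependsOn F t) (hst : Disjoint s t) :
    unifProb (fun ω => E ω ∧ F ω) = unifProb E * unifProb F := by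
  simp only [unifProb]
  rw [← expect_mul_of_dependsOn (fun _ _ h => by rw [hE h]) (fun _ _ h => by rw [hF h]) hst]
  exact expect_congr rfl fun ω _ => by by_cases hE : E ω <;> by_cases hF : F ω <;> simp [hE, hF]

lemma unifProb_forall_mem_of_dependsOn [Nonempty Y] {κ : Type*} (T : Finset κ)
    {E : κ → (ι → Y) → Prop} {s : κ → Set ι} (hE : ∀ t ∈ T, DependsOn (E t) (s t))
    (hs : (T : Set κ).PairwiseDisjoint s) :
    unifProb (fun ω => ∀ t ∈ T, E t ω) = ∏ t ∈ T, unifProb (E t) := by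
  induction T using Finset.induction_on with
  | empty => simp [unifProb_true]
  | insert a T ha ih =>
    simp only [forall_mem_insert] at hE ⊢
    rw [coe_insert, Set.pairwiseDisjoint_insert_of_notMem (mem_coe.not.2 ha)] at hs
    rw [prod_insert ha, ← ih hE.2 hs.1,
      unifProb_and_of_dependsOn hE.1 (dependsOn_forall_mem T hE.2)]
    exact Set.disjoint_iUnion₂_right.2 hs.2

end Coordinates

/-! ### The method of moments for Poisson limits -/

lemma tendsto_of_eventually_dist_le {α κ X : Type*} [PseudoMetricSpace X] {l : Filter α}
    {k : Filter κ} [k.NeBot] {a : α → X} {b : κ → α → X} {B : κ → X} {A : X}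
    (hb : ∀ᶠ i in k, Tendsto (b i) l (𝓝 (B i))) (hB : Tendsto B k (𝓝 A))
    (h : ∀ ε > 0, ∀ᶠ i in k, ∀ᶠ n in l, dist (a n) (b i n) ≤ ε) : Tendsto a l (𝓝 A) := by
  refine Metric.tendsto_nhds.2 fun ε hε => ?_
  obtain ⟨i, hbi, hBi, hi⟩ := (hb.and ((Metric.tendsto_nhds.1 hB (ε / 3) (by positivity)).and
    (h (ε / 3) (by positivity)))).exists
  filter_upwards [Metric.tendsto_nhds.1 hbi (ε / 3) (by positivity), hi] with n hn hin
  linarith [dist_triangle4 (a n) (b i n) (B i) A]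

lemma abs_ite_eq_zero_sub_alternating_sum_choose_le (y L : ℕ) :
    |(if y = 0 then 1 else 0) - ∑ k ∈ range (L + 1), (-1 : ℝ) ^ k * y.choose k| ≤
      y.choose (L + 1) := by
  rcases y with _ | y
  · simp [sum_range_succ']
  · have hsum : ∑ k ∈ range (L + 1), (-1 : ℝ) ^ k * (y + 1).choose k = (-1) ^ L * y.choose L := by
      exact_mod_cast Int.alternating_sum_range_choose_eq_choose (n := y) (m := L)
    rw [hsum, if_neg y.succ_ne_zero, zero_sub, abs_neg, abs_mul, abs_neg_one_pow, one_mul,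
      Nat.abs_cast, Nat.choose_succ_succ]
    exact_mod_cast Nat.le_add_right _ _

lemma abs_ite_eq_sub_alternating_sum_choose_le (x m L : ℕ) :
    |(if x = m then 1 else 0) -
        ∑ k ∈ range (L + 1), (-1 : ℝ) ^ k * ((m + k).choose m * x.choose (m + k))| ≤
      (m + (L + 1)).choose m * x.choose (m + (L + 1)) := by
  have hchoose : ∀ k, ((m + k).choose m * x.choose (m + k) : ℝ) =
      x.choose m * (x - m).choose k := fun k => by
    have h := Nat.choose_mul (n := x) (k := m + k) (s := m) (Nat.le_add_right m k)
    rw [Nat.add_sub_cancel_left] at h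
    exact_mod_cast (mul_comm _ _).trans h
  have hite : (if x = m then 1 else 0 : ℝ) = x.choose m * if x - m = 0 then 1 else 0 := by
    rcases lt_trichotomy x m with h | rfl | h
    · simp [h.ne, Nat.choose_eq_zero_of_lt h]
    · simp
    · simp [h.ne', Nat.sub_ne_zero_of_lt h]
  simp only [hchoose, hite, mul_left_comm _ (x.choose m : ℝ)]
  rw [← mul_sum, ← mul_sub, abs_mul, Nat.abs_cast]
  exact mul_le_mul_of_nonneg_left (abs_ite_eq_zero_sub_alternating_sum_choose_le _ _)
    (Nat.cast_nonneg _)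

lemma choose_mul_pow_div_factorial (l : ℝ) (m k : ℕ) :
    (m + k).choose m * (l ^ (m + k) / (m + k).factorial) =
      l ^ m / m.factorial * (l ^ k / k.factorial) := by
  rw [Nat.cast_add_choose ℝ, pow_add]
  field_simp

lemma tendsto_alternating_sum_pow_div_factorial (l : ℝ) (m : ℕ) :
    Tendsto (fun L => ∑ k ∈ range (L + 1),
        (-1 : ℝ) ^ k * ((m + k).choose m * (l ^ (m + k) / (m + k).factorial)))
      atTop (𝓝 (Real.exp (-l) * l ^ m / m.factorial)) := by
  have hexp : HasSum (fun k : ℕ => (-l) ^ k / k.factorial) (Real.exp (-l)) := by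
    rw [Real.exp_eq_exp_ℝ]
    exact NormedSpace.expSeries_div_hasSum_exp (-l)
  have h := ((hexp.tendsto_sum_nat.comp (tendsto_add_atTop_nat 1)).const_mul
    (l ^ m / m.factorial))
  rw [mul_div_assoc, mul_comm]
  refine h.congr fun L => ?_
  rw [Function.comp_apply, mul_sum]
  refine sum_congr rfl fun k _ => ?_
  rw [choose_mul_pow_div_factorial, neg_pow l k]
  ring

lemma tendsto_choose_mul_pow_div_factorial (l : ℝ) (m : ℕ) :
    Tendsto (fun k => (m + k).choose m * (l ^ (m + k) / (m + k).factorial)) atTop (𝓝 0) := by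
  simp only [choose_mul_pow_div_factorial]
  simpa using (FloorSemiring.tendsto_pow_div_factorial_atTop l).const_mul (l ^ m / m.factorial)

/-- The Bonferroni inequalities truncate the inclusion–exclusion expansion of `P(X = m)` at a
level independent of `n`. -/
theorem tendsto_unifProb_eq_of_tendsto_descFactorial {α : Type*} {u : Filter α} {Ω : α → Type*}
    [∀ n, Fintype (Ω n)] (X : ∀ n, Ω n → ℕ) (l : ℝ)
    (h : ∀ r, Tendsto (fun n => 𝔼 ω, ((X n ω).descFactorial r : ℝ)) u (𝓝 (l ^ r))) (m : ℕ) :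
    Tendsto (fun n => unifProb fun ω => X n ω = m) u
      (𝓝 (Real.exp (-l) * l ^ m / m.factorial)) := by
  have hchoose : ∀ r, Tendsto (fun n => 𝔼 ω, ((X n ω).choose r : ℝ)) u
      (𝓝 (l ^ r / r.factorial)) := fun r => by
    refine ((h r).div_const (r.factorial : ℝ)).congr fun n => ?_
    rw [expect_div]
    refine expect_congr rfl fun ω _ => ?_
    rw [Nat.descFactorial_eq_factorial_mul_choose]
    push_cast
    field_simp
  refine tendsto_of_eventually_dist_le (k := atTop) (b := fun L n => ∑ k ∈ range (L + 1),
      (-1 : ℝ) ^ k * ((m + k).choose m * 𝔼 ω, ((X n ω).choose (m + k) : ℝ)))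
    (.of_forall fun L => tendsto_finsetSum _ fun k _ => ((hchoose _).const_mul _).const_mul _)
    (tendsto_alternating_sum_pow_div_factorial l m) fun ε hε => ?_
  have hsmall := (tendsto_order.1 ((tendsto_choose_mul_pow_div_factorial l m).comp
    (tendsto_add_atTop_nat 1))).2 ε hε
  filter_upwards [hsmall] with L hL
  filter_upwards [(tendsto_order.1 ((hchoose (m + (L + 1))).const_mul
    ((m + (L + 1)).choose m : ℝ))).2 ε hL] with n hn
  refine le_trans ?_ hn.le
  simp only [unifProb, Real.dist_eq, mul_expect]
  rw [← expect_sum_comm, ← expect_sub_distrib]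
  refine (abs_expect_le _ _).trans (expect_le_expect fun ω _ =>
    le_of_eq_of_le ?_ (abs_ite_eq_sub_alternating_sum_choose_le (X n ω) m L))
  congr!

/-! ### Random perfect matchings -/

section Matchings

variable {α : Type*} [DecidableEq α]

lemma swap_comp_swap_comp (p q : α) (f : α → α) :
    Equiv.swap p q ∘ Equiv.swap p q ∘ f = f :=
  funext fun x => Equiv.swap_apply_self p q (f x)

lemma card_erase_erase {V : Finset α} {p q : α} (hp : p ∈ V) (hq : q ∈ V.erase p) :
    ((V.erase p).erase q).card = V.card - 2 := by
  rw [card_erase_of_mem hq, card_erase_of_mem hp, Nat.sub_sub]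

lemma even_card_erase_erase {V : Finset α} {p q : α} (hp : p ∈ V) (hq : q ∈ V.erase p)
    (hV : Even V.card) : Even ((V.erase p).erase q).card := by
  rw [card_erase_erase hp hq]
  exact hV.tsub even_two

lemma erase_nonempty_of_even_card {V : Finset α} (hV : Even V.card) {p : α} (hp : p ∈ V) :
    (V.erase p).Nonempty := by
  have hpos := card_pos.2 ⟨p, hp⟩
  obtain ⟨m, hm⟩ := hV
  rw [← card_pos, card_erase_of_mem hp]
  omega

lemma le_expect_ite_mem {η : ℝ} {W B : Finset α} (hB : B ⊆ W) (hW : W.Nonempty)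
    (h : η * W.card ≤ B.card) : η ≤ 𝔼 q ∈ W, if q ∈ B then 1 else 0 := by
  rwa [expect_eq_sum_div_card, sum_ite_mem, inter_eq_right.2 hB, sum_const, nsmul_one,
    le_div_iff₀ (by exact_mod_cast card_pos.2 hW)]

lemma even_card_sdiff_biUnion_pair {ι : Type*} {T : Finset ι} {a b : ι → α} {V : Finset α}
    (hne : ∀ k ∈ T, a k ≠ b k) (hT : (T : Set ι).PairwiseDisjoint fun k => ({a k, b k} : Finset α))
    (hV : Even #V) (hsub : ∀ k ∈ T, {a k, b k} ⊆ V) :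
    Even #(V \ T.biUnion fun k => {a k, b k}) := by
  rw [card_sdiff_of_subset (biUnion_subset.2 hsub), card_biUnion hT,
    sum_congr rfl fun k hk => card_pair (hne k hk), sum_const, smul_eq_mul]
  exact hV.tsub (even_two.mul_left _)

variable [Fintype α]

/-- The perfect matchings of the finset `V`, encoded as the involutions of the ambient type whose
set of non-fixed points is `V`. -/
noncomputable def matchings (V : Finset α) : Finset (α → α) :=
  univ.filter fun f => Function.Involutive f ∧ ∀ x, f x ≠ x ↔ x ∈ V

lemma mem_matchings {V : Finset α} {f : α → α} :
    f ∈ matchings V ↔ Function.Involutive f ∧ ∀ x, f x ≠ x ↔ x ∈ V := by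
  rw [matchings, mem_filter_univ]

lemma matchings_empty : matchings (∅ : Finset α) = {id} := by
  ext f
  simp only [mem_matchings, notMem_empty, iff_false, not_not, mem_singleton]
  exact ⟨fun h => funext h.2, fun h => h ▸ ⟨fun _ => rfl, fun _ => rfl⟩⟩

lemma swap_comp_mem_matchings {V : Finset α} {p q : α} (hp : p ∈ V) (hq : q ∈ V.erase p)
    {g : α → α} (hg : g ∈ matchings ((V.erase p).erase q)) :
    Equiv.swap p q ∘ g ∈ matchings V := by
  obtain ⟨hqp, hqV⟩ := mem_erase.1 hq
  simp only [mem_matchings, mem_erase] at hg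
  obtain ⟨hinv, hfix⟩ := hg
  have hgp : g p = p := not_not.1 fun h => ((hfix p).1 h).2.1 rfl
  have hgq : g q = q := not_not.1 fun h => ((hfix q).1 h).1 rfl
  have hswap : ∀ x, x ≠ p → x ≠ q → Equiv.swap p q (g x) = g x := fun x hxp hxq =>
    Equiv.swap_apply_of_ne_of_ne (fun h => hxp (by rw [← hinv x, h, hgp]))
      (fun h => hxq (by rw [← hinv x, h, hgq]))
  rw [mem_matchings]
  simp only [Function.Involutive, Function.comp_apply, ← forall_and]
  intro x
  rcases eq_or_ne x p with rfl | hxp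
  · simp [hgp, hgq, hqp, hp]
  rcases eq_or_ne x q with rfl | hxq
  · simp [hgp, hgq, hqp.symm, hqV]
  · rw [hswap x hxp hxq, hinv, Equiv.swap_apply_of_ne_of_ne hxp hxq, hfix]
    simp [hxp, hxq]

lemma swap_comp_mem_matchings_erase {V : Finset α} {p q : α} (hqp : q ≠ p) {f : α → α}
    (hf : f ∈ matchings V) (hpq : f p = q) :
    Equiv.swap p q ∘ f ∈ matchings ((V.erase p).erase q) := by
  simp only [mem_matchings, mem_erase] at hf ⊢
  obtain ⟨hinv, hfix⟩ := hf
  have hqp' : f q = p := hpq ▸ hinv p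
  have hswap : ∀ x, x ≠ p → x ≠ q → Equiv.swap p q (f x) = f x := fun x hxp hxq =>
    Equiv.swap_apply_of_ne_of_ne (fun h => hxq (by rw [← hinv x, h, hpq]))
      (fun h => hxp (by rw [← hinv x, h, hqp']))
  simp only [Function.Involutive, Function.comp_apply, ← forall_and]
  intro x
  rcases eq_or_ne x p with rfl | hxp
  · simp [hpq]
  rcases eq_or_ne x q with rfl | hxq
  · simp [hqp']
  · rw [hswap x hxp hxq, hinv, Equiv.swap_apply_of_ne_of_ne hxp hxq, hfix]
    simp [hxp, hxq]

/-- Composing with the transposition of `p` and `q` adds the chord `{p, q}` to a matching of the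
other points. -/
lemma sum_matchings {V : Finset α} {p : α} (hp : p ∈ V) {M : Type*} [AddCommMonoid M]
    (F : (α → α) → M) :
    ∑ f ∈ matchings V, F f =
      ∑ q ∈ V.erase p, ∑ g ∈ matchings ((V.erase p).erase q), F (Equiv.swap p q ∘ g) := by
  have hmap : ∀ f ∈ matchings V, f p ∈ V.erase p := fun f hf => by
    obtain ⟨hinv, hfix⟩ := mem_matchings.1 hf
    have hne : f p ≠ p := (hfix p).2 hp
    exact mem_erase.2 ⟨hne, (hfix _).1 (by rw [hinv]; exact hne.symm)⟩
  rw [← sum_fiberwise_of_maps_to hmap]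
  refine sum_congr rfl fun q hq => sum_nbij' (Equiv.swap p q ∘ ·) (Equiv.swap p q ∘ ·)
    (fun f hf => ?_) (fun g hg => ?_) (fun f _ => swap_comp_swap_comp p q f)
    (fun g _ => swap_comp_swap_comp p q g) (fun f _ => by rw [swap_comp_swap_comp])
  · rw [mem_filter] at hf
    exact swap_comp_mem_matchings_erase (ne_of_mem_erase hq) hf.1 hf.2
  · have hgp : g p = p := not_not.1 fun h => by simpa using ((mem_matchings.1 hg).2 p).1 h
    exact mem_filter.2 ⟨swap_comp_mem_matchings hp hq hg, by simp [hgp]⟩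

open scoped Nat in
lemma card_matchings {V : Finset α} {m : ℕ} (hV : V.card = 2 * m) :
    (matchings V).card = (2 * m - 1)‼ := by
  induction m generalizing V with
  | zero => rw [card_eq_zero.1 hV, matchings_empty, card_singleton]; rfl
  | succ m ih =>
    obtain ⟨p, hp⟩ : V.Nonempty := card_pos.1 (by omega)
    have hcard : ∀ q ∈ V.erase p, (matchings ((V.erase p).erase q)).card = (2 * m - 1)‼ :=
      fun q hq => ih (by rw [card_erase_erase hp hq]; omega)
    rw [card_eq_sum_ones, sum_matchings hp]
    simp only [← card_eq_sum_ones]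
    rw [sum_congr rfl hcard, sum_const, smul_eq_mul, card_erase_of_mem hp, hV]
    exact (Nat.doubleFactorial_add_one (2 * m)).symm

lemma matchings_nonempty {V : Finset α} (hV : Even V.card) : (matchings V).Nonempty := by
  obtain ⟨m, hm⟩ := hV.exists_two_nsmul
  rw [← card_pos, card_matchings (m := m) (by simpa using hm)]
  exact Nat.doubleFactorial_pos _

/-- The partner of a given point `p` is uniformly distributed, and the remaining points are matched
uniformly. -/
lemma expect_matchings {V : Finset α} (hV : Even V.card) {p : α} (hp : p ∈ V)
    (F : (α → α) → ℝ) :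
    𝔼 f ∈ matchings V, F f =
      𝔼 q ∈ V.erase p, 𝔼 g ∈ matchings ((V.erase p).erase q), F (Equiv.swap p q ∘ g) := by
  obtain ⟨m, hm⟩ : ∃ m, V.card = 2 * (m + 1) := by
    obtain ⟨k, hk⟩ := hV
    have := card_pos.2 ⟨p, hp⟩
    exact ⟨k - 1, by omega⟩
  have hcard : ∀ q ∈ V.erase p, (matchings ((V.erase p).erase q)).card =
      Nat.doubleFactorial (2 * m - 1) :=
    fun q hq => card_matchings (by rw [card_erase_erase hp hq]; omega)
  have hcardV : (matchings V).card = (V.erase p).card * Nat.doubleFactorial (2 * m - 1) := by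
    rw [card_matchings hm, card_erase_of_mem hp, hm]
    exact Nat.doubleFactorial_add_one (2 * m)
  rw [expect_eq_sum_div_card, expect_eq_sum_div_card, sum_matchings hp, hcardV, Nat.cast_mul,
    mul_comm, ← div_div, sum_div]
  exact congrArg (· / _) (sum_congr rfl fun q hq => by rw [expect_eq_sum_div_card, hcard q hq])

lemma expect_matchings_ite_eq {V : Finset α} (hV : Even V.card) {p q : α} (hp : p ∈ V)
    (hq : q ∈ V.erase p) (F : (α → α) → ℝ) :
    𝔼 f ∈ matchings V, (if f p = q then F f else 0) =
      ((V.card - 1 : ℕ) : ℝ)⁻¹ *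
        𝔼 g ∈ matchings ((V.erase p).erase q), F (Equiv.swap p q ∘ g) := by
  have hpartner : ∀ q' ∈ V.erase p, ∀ g ∈ matchings ((V.erase p).erase q'),
      (Equiv.swap p q' ∘ g) p = q' := fun q' _ g hg => by
    have hgp : g p = p := not_not.1 fun h => by simpa using ((mem_matchings.1 hg).2 p).1 h
    simp [hgp]
  rw [expect_matchings hV hp, expect_eq_sum_div_card, sum_eq_single_of_mem q hq,
    card_erase_of_mem hp, div_eq_inv_mul]
  · exact congrArg _ (expect_congr rfl fun g hg => if_pos (hpartner q hq g hg))
  · exact fun q' hq' hne => expect_eq_zero fun g hg =>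
      if_neg fun h => hne ((hpartner q' hq' g hg).symm.trans h)

/-- The probability that a random perfect matching of `N` points contains `r` prescribed disjoint
chords. Thanks to truncated subtraction and `0⁻¹ = 0`, it vanishes when there is no room for `r`
chords. -/
noncomputable def chordProb (N r : ℕ) : ℝ := ∏ k ∈ range r, ((N - 2 * k - 1 : ℕ) : ℝ)⁻¹

lemma chordProb_nonneg (N r : ℕ) : 0 ≤ chordProb N r :=
  prod_nonneg fun _ _ => inv_nonneg.2 (Nat.cast_nonneg _)

lemma chordProb_succ (N r : ℕ) :
    chordProb N (r + 1) = ((N - 1 : ℕ) : ℝ)⁻¹ * chordProb (N - 2) r := by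
  rw [chordProb, prod_range_succ', mul_comm, chordProb]
  simp only [mul_zero, Nat.sub_zero, Nat.mul_succ, ← Nat.sub_sub, Nat.sub_right_comm _ _ 2]

lemma chordProb_le_inv_pow {n r : ℕ} (h : 2 * r ≤ n) : chordProb (2 * n) r ≤ ((n : ℝ) ^ r)⁻¹ := by
  rw [← inv_pow, ← card_range r, ← prod_const, card_range]
  refine prod_le_prod (fun _ _ => inv_nonneg.2 (Nat.cast_nonneg _)) fun k hk => ?_
  have hk := mem_range.1 hk
  exact inv_anti₀ (by exact_mod_cast (by omega : 0 < n)) (by exact_mod_cast (by omega))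

lemma tendsto_chordProb_mul_pow (r : ℕ) :
    Tendsto (fun n : ℕ => chordProb (2 * n) r * (2 * n : ℝ) ^ r) atTop (𝓝 1) := by
  have hfactor : ∀ k : ℕ,
      Tendsto (fun n : ℕ => ((2 * n - 2 * k - 1 : ℕ) : ℝ)⁻¹ * (2 * n)) atTop (𝓝 1) := fun k => by
    have h := (tendsto_natCast_div_add_atTop (-(2 * k + 1) : ℝ)).comp
      (tendsto_id.const_mul_atTop' (zero_lt_two' ℕ))
    refine h.congr' ?_
    filter_upwards [eventually_ge_atTop (k + 1)] with n hn
    simp only [Function.comp_apply, id_eq]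
    rw [Nat.sub_sub, Nat.cast_sub (by omega), div_eq_inv_mul]
    push_cast
    rw [sub_eq_add_neg]
  have h := tendsto_finsetProd (range r) fun k _ => hfactor k
  simp only [prod_const_one] at h
  refine h.congr fun n => ?_
  rw [prod_mul_distrib, prod_const, card_range, chordProb]

lemma expect_matchings_forall_eq_ite {ι : Type*} (T : Finset ι) {a b : ι → α}
    (hne : ∀ k ∈ T, a k ≠ b k) (hT : (T : Set ι).PairwiseDisjoint fun k => ({a k, b k} : Finset α))
    {V : Finset α} (hV : Even #V) (hsub : ∀ k ∈ T, {a k, b k} ⊆ V) {F : (α → α) → ℝ}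
    (hF : ∀ k ∈ T, ∀ g, F (Equiv.swap (a k) (b k) ∘ g) = F g) :
    𝔼 f ∈ matchings V, (if ∀ k ∈ T, f (a k) = b k then F f else 0) =
      chordProb #V #T * 𝔼 f ∈ matchings (V \ T.biUnion fun k => {a k, b k}), F f := by
  induction T using Finset.induction_on generalizing V with
  | empty => simp [chordProb]
  | insert t T ht ih =>
    rw [coe_insert, Set.pairwiseDisjoint_insert_of_notMem (mem_coe.not.2 ht)] at hT
    simp only [forall_mem_insert, insert_subset_iff, singleton_subset_iff] at hne hsub hF
    have hb : b t ∈ V.erase (a t) := mem_erase.2 ⟨hne.1.symm, hsub.1.2⟩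
    have hdisj : ∀ k ∈ T, (b k ≠ a t ∧ b k ≠ b t) ∧ {a k, b k} ⊆ (V.erase (a t)).erase (b t) :=
      fun k hk => by
        have h := hT.2 k hk
        have hk := hsub.2 k hk
        simp only [disjoint_insert_left, disjoint_singleton_left, mem_insert, mem_singleton,
          not_or] at h
        simp only [insert_subset_iff, singleton_subset_iff, mem_erase]
        tauto
    have hsdiff : (V.erase (a t)).erase (b t) \ (T.biUnion fun k => {a k, b k}) =
        V \ (insert t T).biUnion fun k => {a k, b k} := by
      ext x
      simp only [biUnion_insert, Finset.mem_sdiff, mem_union, mem_erase, mem_insert, mem_singleton]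
      tauto
    calc 𝔼 f ∈ matchings V, (if ∀ k ∈ insert t T, f (a k) = b k then F f else 0)
        = 𝔼 f ∈ matchings V,
            (if f (a t) = b t then (if ∀ k ∈ T, f (a k) = b k then F f else 0) else (0 : ℝ)) :=
          expect_congr rfl fun f _ => by simp only [forall_mem_insert, ite_and]
      _ = ((#V - 1 : ℕ) : ℝ)⁻¹ * 𝔼 g ∈ matchings ((V.erase (a t)).erase (b t)),
            (if ∀ k ∈ T, g (a k) = b k then F g else 0) := by
          rw [expect_matchings_ite_eq hV hsub.1.1 hb]
          refine congrArg _ (expect_congr rfl fun g _ => if_congr ?_ (hF.1 g) rfl)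
          refine forall₂_congr fun k hk => ?_
          rw [Function.comp_apply, Equiv.swap_apply_eq_iff,
            Equiv.swap_apply_of_ne_of_ne (hdisj k hk).1.1 (hdisj k hk).1.2]
      _ = chordProb #V #(insert t T) * 𝔼 f ∈ matchings (V \ (insert t T).biUnion fun k =>
            {a k, b k}), F f := by
          rw [ih hne.2 hT.1 (even_card_erase_erase hsub.1.1 hb hV) (fun k hk => (hdisj k hk).2)
            hF.2, card_insert_of_notMem ht, chordProb_succ, card_erase_erase hsub.1.1 hb, mul_assoc,
            hsdiff]

lemma expect_matchings_forall_eq {ι : Type*} (T : Finset ι) {a b : ι → α}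
    (hne : ∀ k ∈ T, a k ≠ b k) (hT : (T : Set ι).PairwiseDisjoint fun k => ({a k, b k} : Finset α))
    {V : Finset α} (hV : Even #V) (hsub : ∀ k ∈ T, {a k, b k} ⊆ V) :
    𝔼 f ∈ matchings V, (if ∀ k ∈ T, f (a k) = b k then 1 else 0) = chordProb #V #T := by
  rw [expect_matchings_forall_eq_ite T hne hT hV hsub fun _ _ _ => rfl,
    expect_const (matchings_nonempty (even_card_sdiff_biUnion_pair hne hT hV hsub)), mul_one]

lemma card_filter_matching_le {V A B : Finset α} {p q : α} {g : α → α} (hA : p ∈ A)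
    (hAB : Disjoint A B) (hg : g ∈ matchings ((V.erase p).erase q)) :
    (if q ∈ B then 1 else 0) + #{x ∈ (A.erase p).erase q | g x ∈ B.erase q} ≤
      #{x ∈ A | (Equiv.swap p q ∘ g) x ∈ B} := by
  have hgp : g p = p := not_not.1 fun h => by simpa using ((mem_matchings.1 hg).2 p).1 h
  have hsub : {x ∈ (A.erase p).erase q | g x ∈ B.erase q} ⊆
      {x ∈ A.erase p | (Equiv.swap p q ∘ g) x ∈ B} := fun x hx => by
    simp only [mem_filter, mem_erase] at hx ⊢
    have hgx : g x ≠ p := fun h => disjoint_left.1 hAB hA (h ▸ hx.2.2)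
    rw [Function.comp_apply, Equiv.swap_apply_of_ne_of_ne hgx hx.2.1]
    exact ⟨hx.1.2, hx.2.2⟩
  rw [← insert_erase hA, filter_insert]
  split_ifs with hq hpB
  · rw [card_insert_of_notMem (by simp), add_comm]
    simpa using card_le_card hsub
  · simp [hgp, hq] at hpB
  · rw [card_insert_of_notMem (by simp)]
    simpa using (card_le_card hsub).trans (Nat.le_succ _)
  · simpa using card_le_card hsub

lemma expect_matchings_pow_card_swap_le {θ : ℝ} (hθ₀ : 0 ≤ θ) (hθ₁ : θ ≤ 1) {V A B : Finset α}
    {p q : α} (hA : p ∈ A) (hAB : Disjoint A B) :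
    𝔼 g ∈ matchings ((V.erase p).erase q), θ ^ #{x ∈ A | (Equiv.swap p q ∘ g) x ∈ B} ≤
      (1 - (1 - θ) * if q ∈ B then 1 else 0) *
        𝔼 g ∈ matchings ((V.erase p).erase q),
          θ ^ #{x ∈ (A.erase p).erase q | g x ∈ B.erase q} := by
  have hq : (1 - (1 - θ) * if q ∈ B then 1 else 0) = θ ^ (if q ∈ B then 1 else 0) := by
    split_ifs <;> simp
  rw [hq, mul_expect]
  refine expect_le_expect fun g hg => ?_
  rw [← pow_add]
  exact pow_le_pow_of_le_one hθ₀ hθ₁ (card_filter_matching_le hA hAB hg)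

/-- Reveal the partners of the points of `A` one at a time: each of the first `k` of them has its
partner in `B` with conditional probability at least `η`. -/
lemma expect_matchings_pow_card_le {θ η : ℝ} (hθ₀ : 0 ≤ θ) (hθ₁ : θ ≤ 1) (hη₀ : 0 ≤ η)
    (hη₁ : η ≤ 1) {k : ℕ} {V A B : Finset α} (hV : Even V.card) (hA : A ⊆ V) (hB : B ⊆ V)
    (hAB : Disjoint A B) (hkA : 2 * k ≤ A.card) (hkB : k + η * V.card ≤ B.card) :
    𝔼 f ∈ matchings V, θ ^ #{x ∈ A | f x ∈ B} ≤ (1 - (1 - θ) * η) ^ k := by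
  induction k generalizing V A B with
  | zero =>
    rw [pow_zero]
    exact expect_le (matchings_nonempty hV) fun f _ => pow_le_one₀ hθ₀ hθ₁
  | succ k ih =>
    push_cast at hkB
    obtain ⟨p, hp⟩ : A.Nonempty := card_pos.1 (by omega)
    have hBp : B ⊆ V.erase p := fun x hx =>
      mem_erase.2 ⟨fun h => disjoint_left.1 hAB hp (h ▸ hx), hB hx⟩
    have hVp := erase_nonempty_of_even_card hV (hA hp)
    have hstep : ∀ q ∈ V.erase p,
        𝔼 g ∈ matchings ((V.erase p).erase q), θ ^ #{x ∈ A | (Equiv.swap p q ∘ g) x ∈ B} ≤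
          (1 - (1 - θ) * if q ∈ B then 1 else 0) * (1 - (1 - θ) * η) ^ k := fun q hq => by
      refine (expect_matchings_pow_card_swap_le hθ₀ hθ₁ hp hAB).trans
        (mul_le_mul_of_nonneg_left (ih (even_card_erase_erase (hA hp) hq hV)
          (erase_subset_erase _ (erase_subset_erase _ hA)) (erase_subset_erase _ hBp)
          (hAB.mono ((erase_subset _ _).trans (erase_subset _ _)) (erase_subset _ _)) ?_ ?_) ?_)
      · have h := pred_card_le_card_erase (s := A.erase p) (a := q)
        rw [card_erase_of_mem hp] at h
        omega
      · have hBq : (B.card : ℝ) ≤ (B.erase q).card + 1 := by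
          exact_mod_cast Nat.sub_le_iff_le_add.1 pred_card_le_card_erase
        have hVq : (((V.erase p).erase q).card : ℝ) ≤ V.card := by
          exact_mod_cast card_le_card ((erase_subset _ _).trans (erase_subset _ _))
        linarith [mul_le_mul_of_nonneg_left hVq hη₀]
      · split_ifs <;> simp [hθ₀]
    have hmean : η ≤ 𝔼 q ∈ V.erase p, if q ∈ B then 1 else 0 := le_expect_ite_mem hBp hVp <| by
      have hVp : ((V.erase p).card : ℝ) ≤ V.card := by
        exact_mod_cast card_le_card (erase_subset _ _)
      linarith [mul_le_mul_of_nonneg_left hVp hη₀, Nat.cast_nonneg (α := ℝ) k]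
    calc 𝔼 f ∈ matchings V, θ ^ #{x ∈ A | f x ∈ B}
        ≤ 𝔼 q ∈ V.erase p, (1 - (1 - θ) * if q ∈ B then 1 else 0) * (1 - (1 - θ) * η) ^ k :=
          (expect_matchings hV (hA hp) _).trans_le (expect_le_expect hstep)
      _ = (1 - (1 - θ) * 𝔼 q ∈ V.erase p, if q ∈ B then 1 else 0) * (1 - (1 - θ) * η) ^ k := by
          rw [← expect_mul, expect_sub_distrib, ← mul_expect, expect_const hVp]
      _ ≤ (1 - (1 - θ) * η) ^ (k + 1) := by
          rw [pow_succ']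
          refine mul_le_mul_of_nonneg_right ?_ (pow_nonneg (by nlinarith) _)
          nlinarith

lemma expect_matchings_forall_eq_pow_card_le {ι : Type*} (T : Finset ι) {a b : ι → α}
    (hne : ∀ k ∈ T, a k ≠ b k) (hT : (T : Set ι).PairwiseDisjoint fun k => ({a k, b k} : Finset α))
    {V A B : Finset α} (hV : Even #V) (hsub : ∀ k ∈ T, {a k, b k} ⊆ V)
    (hA : A ⊆ V \ T.biUnion fun k => {a k, b k}) (hB : B ⊆ V \ T.biUnion fun k => {a k, b k})
    (hAB : Disjoint A B) {θ η : ℝ} (hθ₀ : 0 ≤ θ) (hθ₁ : θ ≤ 1) (hη₀ : 0 ≤ η) (hη₁ : η ≤ 1) {m : ℕ}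
    (hmA : 2 * m ≤ #A) (hmB : m + η * #V ≤ #B) :
    𝔼 f ∈ matchings V, (if ∀ k ∈ T, f (a k) = b k then θ ^ #{x ∈ A | f x ∈ B} else 0) ≤
      chordProb #V #T * (1 - (1 - θ) * η) ^ m := by
  have hnotMem : ∀ k ∈ T, a k ∉ B ∧ b k ∉ B := fun k hk =>
    ⟨fun h => (Finset.mem_sdiff.1 (hB h)).2 (mem_biUnion.2 ⟨k, hk, by simp⟩),
      fun h => (Finset.mem_sdiff.1 (hB h)).2 (mem_biUnion.2 ⟨k, hk, by simp⟩)⟩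
  have hswap : ∀ k ∈ T, ∀ x, Equiv.swap (a k) (b k) x ∈ B ↔ x ∈ B := fun k hk x => by
    rw [Equiv.swap_apply_def]
    split_ifs with h₁ h₂ <;> simp_all
  rw [expect_matchings_forall_eq_ite T hne hT hV hsub fun k hk g => by
    simp only [Function.comp_apply, hswap k hk]]
  refine mul_le_mul_of_nonneg_left (expect_matchings_pow_card_le hθ₀ hθ₁ hη₀ hη₁
    (even_card_sdiff_biUnion_pair hne hT hV hsub) hA hB hAB hmA (le_trans ?_ hmB))
    (chordProb_nonneg _ _)
  gcongr
  exact sdiff_subset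

end Matchings

/-! ### Fair coins attached to unordered pairs -/

section Coins

variable {α κ : Type*}

lemma disjoint_coins {S S' : Set (Sym2 α)} (h : Disjoint S S') :
    Disjoint {z : α × α | s(z.1, z.2) ∈ S} {z | s(z.1, z.2) ∈ S'} :=
  h.preimage fun z : α × α => s(z.1, z.2)

variable [LinearOrder α]

/-- The outcome of the coin that orients a crossing of two chords represented by `a` and `b`, as in
`OverD`: it tells whether `a` goes over `b`. -/
def CoinOver (ω : α × α → Bool) (a b : α) : Prop :=
  (a ≤ b ∧ ω (a, b) = true) ∨ (b < a ∧ ω (b, a) = false)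

lemma coinOver_comm {ω : α × α → Bool} {a b : α} (h : a ≠ b) :
    CoinOver ω b a ↔ ¬ CoinOver ω a b := by
  rcases h.lt_or_gt with hab | hab <;>
    simp [CoinOver, hab, hab.le, not_le_of_gt hab, not_lt_of_ge hab.le]

lemma coinOver_not (ω : α × α → Bool) (a b : α) :
    CoinOver (fun z => !ω z) a b ↔ ¬ CoinOver ω a b := by
  rcases le_or_gt a b with hab | hab
  · simp [CoinOver, hab, not_lt_of_ge hab]
  · simp [CoinOver, hab, not_le_of_gt hab]

lemma dependsOn_coinOver (a b : α) :
    DependsOn (fun ω : α × α → Bool => CoinOver ω a b) {z | s(z.1, z.2) = s(a, b)} := by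
  intro ω ω' h
  simp only [CoinOver, h (a, b) rfl, h (b, a) Sym2.eq_swap]

/-- The coins of all crossings of the chord represented by `x` with chords represented by `r t`
show the same direction, `x` being over all of them or under all of them. -/
def CoinExtreme (ω : α × α → Bool) (T : Finset κ) (x : α) (r : κ → α) : Prop :=
  (∀ t ∈ T, CoinOver ω x (r t)) ∨ ∀ t ∈ T, CoinOver ω (r t) x

lemma dependsOn_coinExtreme (T : Finset κ) (x : α) (r : κ → α) :
    DependsOn (fun ω : α × α → Bool => CoinExtreme ω T x r)
      {z | s(z.1, z.2) ∈ (fun t => s(x, r t)) '' T} := by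
  intro ω ω' h
  have hover : ∀ t ∈ T, CoinOver ω x (r t) = CoinOver ω' x (r t) := fun t ht =>
    dependsOn_coinOver x (r t) fun z hz => h z ⟨t, ht, hz.symm⟩
  have hunder : ∀ t ∈ T, CoinOver ω (r t) x = CoinOver ω' (r t) x := fun t ht =>
    dependsOn_coinOver (r t) x fun z hz => h z ⟨t, ht, (hz.trans Sym2.eq_swap).symm⟩
  exact propext <| or_congr (forall₂_congr fun t ht => (hover t ht).to_iff)
    (forall₂_congr fun t ht => (hunder t ht).to_iff)

variable [Fintype α]

lemma unifProb_coinOver (a b : α) : unifProb (fun ω : α × α → Bool => CoinOver ω a b) = 1 / 2 := by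
  have hflip : Function.Involutive fun (ω : α × α → Bool) z => !ω z := fun ω => by simp
  have h := unifProb_equiv hflip.toPerm fun ω => CoinOver ω a b
  have hnot := (unifProb_congr fun ω => coinOver_not ω a b).symm.trans h
  rw [unifProb_not] at hnot
  linarith

lemma unifProb_forall_coinOver (T : Finset κ) {a b : κ → α}
    (h : Set.InjOn (fun t => s(a t, b t)) T) :
    unifProb (fun ω : α × α → Bool => ∀ t ∈ T, CoinOver ω (a t) (b t)) = (1 / 2) ^ T.card := by
  rw [unifProb_forall_mem_of_dependsOn T (fun t _ => dependsOn_coinOver (a t) (b t))]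
  · simp only [unifProb_coinOver, prod_const]
  · exact fun t ht u hu htu => disjoint_coins (Set.disjoint_singleton.2 (h.ne ht hu htu))

lemma unifProb_forall_not_coinOver_path (T : Finset κ) {x y : α} {r : κ → α} (hxy : x ≠ y)
    (hr : Set.InjOn r T) (hx : ∀ t ∈ T, r t ≠ x) (hy : ∀ t ∈ T, r t ≠ y) :
    unifProb (fun ω : α × α → Bool => ∀ t ∈ T, ¬ (CoinOver ω x (r t) ∧ CoinOver ω (r t) y)) =
      (3 / 4) ^ T.card := by
  have hdep : ∀ t, DependsOn (fun ω : α × α → Bool => ¬ (CoinOver ω x (r t) ∧ CoinOver ω (r t) y))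
      {z | s(z.1, z.2) ∈ ({s(x, r t), s(r t, y)} : Set (Sym2 α))} := fun t ω ω' h =>
    congrArg Not <| congrArg₂ And (dependsOn_coinOver x (r t) fun z hz => h z (Or.inl hz))
      (dependsOn_coinOver (r t) y fun z hz => h z (Or.inr hz))
  have hprob : ∀ t,
      unifProb (fun ω : α × α → Bool => ¬ (CoinOver ω x (r t) ∧ CoinOver ω (r t) y)) = 3 / 4 :=
    fun t => by
      have hne : s(x, r t) ≠ s(r t, y) := fun h => by
        rw [Sym2.eq_swap, Sym2.congr_right] at h
        exact hxy h
      rw [unifProb_not, unifProb_and_of_dependsOn (dependsOn_coinOver x (r t))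
        (dependsOn_coinOver (r t) y) (disjoint_coins (Set.disjoint_singleton.2 hne)),
        unifProb_coinOver, unifProb_coinOver]
      norm_num
  rw [unifProb_forall_mem_of_dependsOn T (fun t _ => hdep t),
    prod_congr rfl fun t _ => hprob t, prod_const]
  refine fun t ht u hu htu => disjoint_coins ?_
  have htu := hr.ne ht hu htu
  have hx := hx t ht
  have hy := hy t ht
  simp only [Set.disjoint_insert_right, Set.disjoint_singleton_right, Set.mem_insert_iff,
    Set.mem_singleton_iff, Sym2.eq_iff]
  grind

/-- The probability that a chord with `c` crossings is over all of them or under all of them. -/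
noncomputable def extremeProb (c : ℕ) : ℝ := if c = 0 then 1 else 2 * (1 / 2) ^ c

lemma extremeProb_nonneg (c : ℕ) : 0 ≤ extremeProb c := by
  unfold extremeProb
  split_ifs <;> positivity

lemma extremeProb_le_one (c : ℕ) : extremeProb c ≤ 1 := by
  rcases c with _ | c
  · simp [extremeProb]
  · rw [extremeProb, if_neg c.succ_ne_zero, pow_succ']
    linarith [pow_le_one₀ (n := c) (by norm_num : (0 : ℝ) ≤ 1 / 2) (by norm_num)]

lemma sum_range_succ_extremeProb (K : ℕ) :
    ∑ c ∈ range (K + 1), extremeProb c = 3 - 2 * (1 / 2) ^ K := by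
  induction K with
  | zero => norm_num [extremeProb]
  | succ K ih =>
    rw [sum_range_succ, ih, extremeProb, if_neg K.succ_ne_zero]
    ring

lemma tendsto_sum_range_extremeProb :
    Tendsto (fun K => ∑ c ∈ range K, extremeProb c) atTop (𝓝 3) := by
  have hpow : Tendsto (fun K : ℕ => (1 / 2 : ℝ) ^ K) atTop (𝓝 0) :=
    tendsto_pow_atTop_nhds_zero_of_lt_one (by norm_num) (by norm_num)
  rw [← tendsto_add_atTop_iff_nat 1]
  simpa [sum_range_succ_extremeProb] using (hpow.const_mul 2).const_sub 3

lemma unifProb_coinExtreme (T : Finset κ) {x : α} {r : κ → α} (hr : Set.InjOn r T)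
    (hx : ∀ t ∈ T, r t ≠ x) :
    unifProb (fun ω : α × α → Bool => CoinExtreme ω T x r) = extremeProb T.card := by
  rcases T.eq_empty_or_nonempty with rfl | ⟨t₀, ht₀⟩
  · simp [CoinExtreme, extremeProb, unifProb_true]
  have hinj : Set.InjOn (fun t => s(x, r t)) T := fun t ht u hu h =>
    hr ht hu (Sym2.congr_right.1 h)
  have hinj' : Set.InjOn (fun t => s(r t, x)) T := fun t ht u hu h =>
    hr ht hu (Sym2.congr_left.1 h)
  simp only [CoinExtreme]
  rw [unifProb_or_of_disjoint fun ω hover hunder =>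
      (coinOver_comm (hx t₀ ht₀).symm).1 (hunder t₀ ht₀) (hover t₀ ht₀),
    unifProb_forall_coinOver T hinj, unifProb_forall_coinOver T hinj', extremeProb,
    if_neg (card_ne_zero_of_mem ht₀)]
  ring

end Coins

/-! ### Crossing chords and reachability -/

section Crossing

variable {n : ℕ} {C : ChordDiagram n} {x y u : Fin (2 * n)}

lemma Between.swap {m : ℕ} {a b c : Fin m} (h : Between a b c) : Between b a c := by
  rwa [Between, min_comm, max_comm]

lemma between_comm {m : ℕ} {a b c : Fin m} : Between a b c ↔ Between b a c :=
  ⟨Between.swap, Between.swap⟩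

lemma crosses_iff : Crosses C x u ↔ ¬ (Between x (C.1 x) u ↔ Between x (C.1 x) (C.1 u)) :=
  xor_iff_not_iff _ _

lemma crosses_left : Crosses C (C.1 x) u ↔ Crosses C x u := by
  rw [crosses_iff, crosses_iff, C.2.1, between_comm, between_comm (c := C.1 u)]

lemma crosses_right : Crosses C x (C.1 u) ↔ Crosses C x u := by
  rw [crosses_iff, crosses_iff, C.2.1]
  tauto

lemma eq_apply_comm : x = C.1 u ↔ u = C.1 x :=
  ⟨fun h => by rw [h, C.2.1], fun h => by rw [h, C.2.1]⟩

lemma not_crosses_self : ¬ Crosses C x x := by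
  simp [crosses_iff, Between, and_comm]

lemma Crosses.ne (h : Crosses C x u) : u ≠ x := fun h' => not_crosses_self (h' ▸ h)

lemma Crosses.ne_apply (h : Crosses C x u) : u ≠ C.1 x := fun h' =>
  not_crosses_self (crosses_right.1 (h' ▸ h))

lemma Crosses.symm (h : Crosses C x u) : Crosses C u x := by
  have hux := h.ne
  have huy := h.ne_apply
  have hvx : C.1 u ≠ x := fun h' => huy (eq_apply_comm.1 h'.symm)
  have hvy : C.1 u ≠ C.1 x := (crosses_right.2 h).ne_apply
  have hu := C.2.2 u
  have hx := C.2.2 x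
  rw [crosses_iff] at h ⊢
  simp only [Between, min_lt_iff, lt_max_iff] at h ⊢
  generalize C.1 x = y at *
  generalize C.1 u = v at *
  simp only [ne_eq, Fin.ext_iff, Fin.lt_def] at *
  omega

lemma chordRep_apply : chordRep C (C.1 x) = chordRep C x := by
  rw [chordRep, chordRep, C.2.1, min_comm]

lemma chordRep_eq_iff : chordRep C x = chordRep C u ↔ u = x ∨ u = C.1 x := by
  refine ⟨fun h => ?_, ?_⟩
  · rcases min_choice x (C.1 x) with hx | hx <;> rcases min_choice u (C.1 u) with hu | hu <;>
      rw [chordRep, chordRep, hx, hu] at h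
    · exact Or.inl h.symm
    · exact Or.inr (eq_apply_comm.1 h)
    · exact Or.inr h.symm
    · exact Or.inl (by rw [← C.2.1 u, ← h, C.2.1])
  · rintro (rfl | rfl)
    · rfl
    · exact chordRep_apply.symm

lemma disjoint_pair_iff_chordRep_ne :
    Disjoint ({x, C.1 x} : Finset (Fin (2 * n))) {u, C.1 u} ↔ chordRep C x ≠ chordRep C u := by
  have hxu : x = C.1 u ↔ u = C.1 x := eq_apply_comm
  have hinj : C.1 x = C.1 u ↔ x = u := (Function.LeftInverse.injective C.2.1).eq_iff
  rw [ne_eq, chordRep_eq_iff]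
  simp only [disjoint_insert_left, disjoint_singleton_left, mem_insert, mem_singleton, hinj, hxu]
  tauto

variable {D : OrientedChordDiagram n}

lemma overD_left : OverD D (D.1.1 x) u ↔ OverD D x u := by
  rw [OverD, OverD, crosses_left, chordRep_apply]

lemma overD_right : OverD D x (D.1.1 u) ↔ OverD D x u := by
  rw [OverD, OverD, crosses_right, chordRep_apply]

lemma overD_curry {ω : Fin (2 * n) × Fin (2 * n) → Bool} :
    OverD (C, Function.curry ω) x u ↔
      Crosses C x u ∧ CoinOver ω (chordRep C x) (chordRep C u) := Iff.rfl

lemma reachChord_self : ReachChord D x x := Or.inl rfl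

lemma reachChord_apply : ReachChord D x (D.1.1 x) := Or.inr (Or.inl rfl)

lemma OverD.reachChord (h : OverD D x u) : ReachChord D x u :=
  Or.inr (Or.inr (Relation.ReflTransGen.single h))

lemma reachChord_iff :
    ReachChord D x u ↔ (u = x ∨ u = D.1.1 x) ∨ Relation.TransGen (OverD D) x u := by
  rw [ReachChord, Relation.reflTransGen_iff_eq_or_transGen]
  tauto

lemma ReachChord.trans (hxy : ReachChord D x y) (hyu : ReachChord D y u) : ReachChord D x u := by
  rw [reachChord_iff] at *
  rcases hxy with (rfl | rfl) | hxy
  · exact hyu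
  · rcases hyu with (rfl | rfl) | hyu
    · exact Or.inl (Or.inr rfl)
    · exact Or.inl (Or.inl (D.1.2.1 x))
    · obtain ⟨z, hxz, hzu⟩ := Relation.TransGen.head'_iff.1 hyu
      exact Or.inr (.head' (overD_left.1 hxz) hzu)
  · rcases hyu with (rfl | rfl) | hyu
    · exact Or.inr hxy
    · obtain ⟨z, hxz, hzy⟩ := Relation.TransGen.tail'_iff.1 hxy
      exact Or.inr (.tail' hxz (overD_right.2 hzy))
    · exact Or.inr (hxy.trans hyu)

lemma MutualReach.symm (h : MutualReach D x u) : MutualReach D u x := ⟨h.2, h.1⟩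

lemma MutualReach.trans (hxy : MutualReach D x y) (hyu : MutualReach D y u) : MutualReach D x u :=
  ⟨hxy.1.trans hyu.1, hyu.2.trans hxy.2⟩

lemma mutualReach_apply : MutualReach D x (D.1.1 x) :=
  ⟨reachChord_apply, Or.inr (Or.inl (D.1.2.1 x).symm)⟩

/-- The chord of `x` goes over no chord, or under no chord. Such a chord is a strong component on
its own; for short chords the converse holds with high probability. -/
def Extreme (D : OrientedChordDiagram n) (x : Fin (2 * n)) : Prop :=
  (∀ u, ¬ OverD D x u) ∨ ∀ u, ¬ OverD D u x

lemma Extreme.not_mutualReach (h : Extreme D x) (hux : u ≠ x) (huy : u ≠ D.1.1 x) :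
    ¬ MutualReach D x u := by
  rintro ⟨hxu, hu⟩
  have hvx : x ≠ D.1.1 u := fun h' => huy (eq_apply_comm.1 h')
  rw [reachChord_iff, or_iff_right (by tauto)] at hxu hu
  rcases h with h | h
  · obtain ⟨z, hxz, -⟩ := Relation.TransGen.head'_iff.1 hxu
    exact h z hxz
  · obtain ⟨z, -, hzx⟩ := Relation.TransGen.tail'_iff.1 hu
    exact h z hzx

end Crossing

/-! ### Typical oriented chord diagrams -/

section Typical

variable {n K : ℕ} {C : ChordDiagram n} {D : OrientedChordDiagram n} {o x : Fin (2 * n)}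

/-- The endpoints of the chord of `x` differ by at most `K` as integers. A chord joining two points
near opposite ends of `{0, …, 2n - 1}` does not count as short; whp there is none. -/
def Short (K : ℕ) (C : ChordDiagram n) (x : Fin (2 * n)) : Prop :=
  (x : ℕ) ≤ C.1 x + K ∧ (C.1 x : ℕ) ≤ x + K

lemma short_apply : Short K C (C.1 x) ↔ Short K C x := by
  rw [Short, Short, C.2.1, and_comm]

/-- The number of extreme chords joining some point `i` to `i + c + 1` with `c < K`. -/
noncomputable def shortExtremeCount (K : ℕ) (D : OrientedChordDiagram n) : ℕ :=
  #{s : Fin (2 * n) × Fin K | (D.1.1 s.1 : ℕ) = s.1 + s.2 + 1 ∧ Extreme D s.1}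

/-- The chord of `x` is not a strong component on its own. -/
def InLargeComponent (D : OrientedChordDiagram n) (x : Fin (2 * n)) : Prop :=
  ∃ u, u ≠ x ∧ u ≠ D.1.1 x ∧ MutualReach D x u

/-- The properties of a diagram, all of them holding with probability close to one, that reduce the
theorem to the statistics of extreme short chords: the chords that are not short form part of the
strong component of the chord of `o`, and short chords only cross such chords. -/
structure IsTypical (K : ℕ) (D : OrientedChordDiagram n) (o : Fin (2 * n)) : Prop where
  mutualReach : ∀ x, ¬ Short K D.1 x → MutualReach D x o
  not_crosses : ∀ x u, Short K D.1 x → Short K D.1 u → ¬ Crosses D.1 x u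
  not_short : ¬ Short K D.1 o
  exists_not_short : ∃ p, ¬ Short K D.1 p ∧ p ≠ o ∧ p ≠ D.1.1 o

namespace IsTypical

lemma mutualReach_of_not_extreme (h : IsTypical K D o) (hx : ¬ Extreme D x) :
    MutualReach D x o := by
  by_cases hs : Short K D.1 x
  · simp only [Extreme, not_or, not_forall, not_not] at hx
    obtain ⟨⟨u, hxu⟩, v, hvx⟩ := hx
    have hu : ¬ Short K D.1 u := fun hu => h.not_crosses x u hs hu hxu.1
    have hv : ¬ Short K D.1 v := fun hv => h.not_crosses v x hv hs hvx.1
    exact ⟨hxu.reachChord.trans (h.mutualReach u hu).1,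
      (h.mutualReach v hv).2.trans hvx.reachChord⟩
  · exact h.mutualReach x hs

lemma inLargeComponent_of_not_short (h : IsTypical K D o) (hx : ¬ Short K D.1 x) :
    InLargeComponent D x := by
  obtain ⟨p, hp, hpo, hpo'⟩ := h.exists_not_short
  by_cases hxo : o = x ∨ o = D.1.1 x
  · refine ⟨p, ?_, ?_, (h.mutualReach x hx).trans (h.mutualReach p hp).symm⟩
    · rcases hxo with rfl | rfl
      · exact hpo
      · rwa [D.1.2.1] at hpo'
    · rcases hxo with rfl | rfl
      · exact hpo'
      · exact hpo
  · rw [not_or] at hxo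
    exact ⟨o, hxo.1, hxo.2, h.mutualReach x hx⟩

lemma not_inLargeComponent_iff (h : IsTypical K D o) :
    ¬ InLargeComponent D x ↔ Short K D.1 x ∧ Extreme D x := by
  refine ⟨fun hx => ?_, fun ⟨_, he⟩ ⟨u, hux, huy, hu⟩ => he.not_mutualReach hux huy hu⟩
  have hs : Short K D.1 x := not_not.1 fun hs => hx (h.inLargeComponent_of_not_short hs)
  refine ⟨hs, not_not.1 fun he => hx ⟨o, ?_, ?_, h.mutualReach_of_not_extreme he⟩⟩
  · rintro rfl
    exact h.not_short hs
  · rintro rfl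
    exact h.not_short (short_apply.2 hs)

lemma exists_inLargeComponent (h : IsTypical K D o) : ∃ x, InLargeComponent D x :=
  ⟨o, h.inLargeComponent_of_not_short h.not_short⟩

lemma mutualReach_of_inLargeComponent (h : IsTypical K D o) {y : Fin (2 * n)}
    (hx : InLargeComponent D x) (hy : InLargeComponent D y) : MutualReach D x y := by
  have hroot : ∀ {z}, InLargeComponent D z → MutualReach D z o := fun ⟨u, huz, huz', hu⟩ =>
    h.mutualReach_of_not_extreme fun he => he.not_mutualReach huz huz' hu
  exact (hroot hx).trans (hroot hy).symm

lemma singleCount_eq (h : IsTypical K D o) : singleCount n D = shortExtremeCount K D := by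
  have hsingle : ∀ x, (∀ u, u ≠ x → u ≠ D.1.1 x → ¬ MutualReach D x u) ↔
      Short K D.1 x ∧ Extreme D x := fun x => by
    rw [← h.not_inLargeComponent_iff]
    simp only [InLargeComponent, not_exists, not_and]
  simp only [singleCount, shortExtremeCount, hsingle]
  symm
  refine card_bij (fun s _ => s.1) (fun s hs => ?_) (fun s hs t ht hst => ?_) (fun x hx => ?_)
  · simp only [mem_filter_univ] at hs ⊢
    exact ⟨Fin.lt_def.2 (by omega), ⟨by omega, by omega⟩, hs.2⟩
  · simp only [mem_filter_univ] at hs ht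
    refine Prod.ext hst (Fin.ext ?_)
    have ht := hst ▸ ht.1
    omega
  · simp only [mem_filter_univ, Fin.lt_def] at hx
    obtain ⟨hlt, ⟨-, hK⟩, he⟩ := hx
    refine ⟨(x, ⟨D.1.1 x - x - 1, by omega⟩), ?_, rfl⟩
    simp only [mem_filter_univ]
    exact ⟨by omega, he⟩

end IsTypical

end Typical

/-! ### Random chord diagrams -/

section RandomChordDiagram

variable {n : ℕ}

lemma coe_mem_matchings (C : ChordDiagram n) : C.1 ∈ matchings (univ : Finset (Fin (2 * n))) :=
  mem_matchings.2 ⟨C.2.1, fun x => iff_of_true (C.2.2 x) (mem_univ x)⟩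

lemma expect_chordDiagram (F : (Fin (2 * n) → Fin (2 * n)) → ℝ) :
    𝔼 C : ChordDiagram n, F C.1 = 𝔼 f ∈ matchings univ, F f :=
  expect_bij (fun C _ => C.1) (fun C _ => coe_mem_matchings C) (fun _ _ => rfl)
    (fun _ _ _ _ h => Subtype.ext h) fun f hf =>
      ⟨⟨f, (mem_matchings.1 hf).1, fun x => ((mem_matchings.1 hf).2 x).2 (mem_univ x)⟩,
        mem_univ _, rfl⟩

instance : Nonempty (ChordDiagram n) := by
  obtain ⟨f, hf⟩ := matchings_nonempty (V := (univ : Finset (Fin (2 * n)))) (by simp)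
  exact ⟨f, (mem_matchings.1 hf).1, fun x => ((mem_matchings.1 hf).2 x).2 (mem_univ x)⟩

lemma probD_eq_unifProb (E : OrientedChordDiagram n → Prop) : probD n E = unifProb E := by
  rw [probD, unifProb, expect_eq_sum_div_card, sum_boole]

lemma unifProb_orientedChordDiagram (E : OrientedChordDiagram n → Prop) :
    unifProb E = 𝔼 C, unifProb fun ω => E (C, Function.curry ω) := by
  rw [unifProb_prod]
  exact expect_congr rfl fun C _ => (unifProb_equiv (Equiv.curry _ _ _) fun ω => E (C, ω)).symm

lemma unifProb_fst (E : ChordDiagram n → Prop) :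
    unifProb (fun D : OrientedChordDiagram n => E D.1) = unifProb E := by
  rw [unifProb_prod]
  exact expect_congr rfl fun C _ => Fintype.expect_const (if E C then (1 : ℝ) else 0)

section PrescribedChords

variable {ι : Type*} [Fintype ι]

lemma unifProb_forall_apply_eq {a b : ι → Fin (2 * n)} (hne : ∀ k, a k ≠ b k)
    (hab : Pairwise fun k l => Disjoint ({a k, b k} : Finset (Fin (2 * n))) {a l, b l}) :
    unifProb (fun C : ChordDiagram n => ∀ k, C.1 (a k) = b k) =
      chordProb (2 * n) (Fintype.card ι) := by
  have h := expect_matchings_forall_eq univ (fun k _ => hne k) (hab.set_pairwise _)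
    (V := univ) (by simp) fun k _ => subset_univ _
  simp only [mem_univ, true_imp_iff, card_univ, Fintype.card_fin] at h
  rw [← h, ← expect_chordDiagram, unifProb]
  congr!

lemma unifProb_forall_apply_eq_le {a b : ι → Fin (2 * n)}
    (hab : Function.Injective fun k => s(a k, b k)) :
    unifProb (fun C : ChordDiagram n => ∀ k, C.1 (a k) = b k) ≤
      chordProb (2 * n) (Fintype.card ι) := by
  by_cases h : ∃ C : ChordDiagram n, ∀ k, C.1 (a k) = b k
  · obtain ⟨C, hC⟩ := h
    refine (unifProb_forall_apply_eq (fun k => hC k ▸ (C.2.2 _).symm) fun k l hkl => ?_).le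
    have hkl := hab.ne hkl
    simp only [← hC, ne_eq, Sym2.eq_iff] at hkl
    simp only [← hC, disjoint_insert_left, disjoint_singleton_left, mem_insert, mem_singleton]
    have hinj : ∀ p q, C.1 p = C.1 q → p = q := fun p q h => by rw [← C.2.1 p, h, C.2.1]
    have := C.2.1
    grind
  · rw [unifProb_congr fun C => iff_false_intro (not_exists.1 h C), unifProb_false]
    exact chordProb_nonneg _ _

lemma unifProb_le_card_mul_chordProb {τ : Type*} (T : Finset τ) {a b : τ → ι → Fin (2 * n)}
    (hab : ∀ t ∈ T, Function.Injective fun k => s(a t k, b t k)) {E : ChordDiagram n → Prop}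
    (hE : ∀ C, E C → ∃ t ∈ T, ∀ k, C.1 (a t k) = b t k) :
    unifProb E ≤ T.card * chordProb (2 * n) (Fintype.card ι) :=
  calc unifProb E ≤ ∑ t ∈ T, unifProb fun C : ChordDiagram n => ∀ k, C.1 (a t k) = b t k :=
        (unifProb_mono hE).trans (unifProb_exists_le_sum T _)
    _ ≤ T.card • chordProb (2 * n) (Fintype.card ι) :=
        sum_le_card_nsmul _ _ _ fun t ht => unifProb_forall_apply_eq_le (hab t ht)
    _ = T.card * chordProb (2 * n) (Fintype.card ι) := nsmul_eq_mul _ _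

end PrescribedChords

lemma unifProb_apply_mem_le (p : Fin (2 * n)) (Q : Finset (Fin (2 * n))) :
    unifProb (fun C : ChordDiagram n => C.1 p ∈ Q) ≤ Q.card * chordProb (2 * n) 1 :=
  unifProb_le_card_mul_chordProb (ι := Unit) Q (a := fun _ _ => p) (b := fun q _ => q)
    (fun _ _ => Function.injective_of_subsingleton _) fun C hC => ⟨C.1 p, hC, fun _ => rfl⟩

/-- The points at distance at most `K` from `p` on the integer line. -/
def near {m : ℕ} (K : ℕ) (p : Fin m) : Finset (Fin m) :=
  {q | (p : ℕ) ≤ q + K ∧ (q : ℕ) ≤ p + K}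

lemma mem_near {m K : ℕ} {p q : Fin m} : q ∈ near K p ↔ (p : ℕ) ≤ q + K ∧ (q : ℕ) ≤ p + K := by
  rw [near, mem_filter_univ]

lemma card_near_le {m : ℕ} (K : ℕ) (p : Fin m) : #(near K p) ≤ 2 * K + 1 := by
  rw [← card_range (2 * K + 1)]
  refine card_le_card_of_injOn (fun q => (q : ℕ) + K - p) (fun q hq => ?_) fun q hq r hr h => ?_
  · simp only [mem_coe, mem_near, coe_range, Set.mem_Iio] at hq ⊢
    omega
  · simp only [mem_coe, mem_near] at hq hr
    dsimp only at h
    exact Fin.ext (by omega)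

lemma unifProb_short_le (K : ℕ) (p : Fin (2 * n)) :
    unifProb (fun C : ChordDiagram n => Short K C p) ≤ (2 * K + 1) * chordProb (2 * n) 1 :=
  calc unifProb (fun C : ChordDiagram n => Short K C p)
      = unifProb fun C : ChordDiagram n => C.1 p ∈ near K p :=
        unifProb_congr fun _ => mem_near.symm
    _ ≤ #(near K p) * chordProb (2 * n) 1 := unifProb_apply_mem_le p _
    _ ≤ (2 * K + 1) * chordProb (2 * n) 1 :=
        mul_le_mul_of_nonneg_right (by exact_mod_cast card_near_le K p) (chordProb_nonneg _ _)

lemma exists_near_of_short_of_crosses {K : ℕ} {C : ChordDiagram n} {x u : Fin (2 * n)}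
    (hx : Short K C x) (hu : Short K C u) (h : Crosses C x u) :
    ∃ v ∈ near (2 * K) x, C.1 v ∈ near (2 * K) x ∧ s(x, C.1 x) ≠ s(v, C.1 v) := by
  obtain ⟨v, hv, hvK⟩ : ∃ v, Between x (C.1 x) v ∧ Short K C v := by
    rcases h with h | h
    · exact ⟨u, h.1, hu⟩
    · exact ⟨C.1 u, h.1, short_apply.2 hu⟩
  simp only [Between, Short, Fin.lt_def, Fin.coe_min, Fin.coe_max] at hv hvK hx
  refine ⟨v, mem_near.2 (by omega), mem_near.2 (by omega), fun heq => ?_⟩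
  rcases Sym2.eq_iff.1 heq with ⟨rfl, -⟩ | ⟨-, rfl⟩ <;> omega

lemma unifProb_exists_short_crosses_le (K : ℕ) (x : Fin (2 * n)) :
    unifProb (fun C : ChordDiagram n => Short K C x ∧ ∃ u, Short K C u ∧ Crosses C x u) ≤
      (4 * K + 1) ^ 3 * chordProb (2 * n) 2 := by
  set S := near (2 * K) x
  set T := {t ∈ S ×ˢ S ×ˢ S | s(x, t.1) ≠ s(t.2.1, t.2.2)} with hT
  have hcard : (#T : ℝ) ≤ (4 * K + 1) ^ 3 := by
    have hS : #S ≤ 4 * K + 1 := (card_near_le _ _).trans (by omega)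
    have : #T ≤ (4 * K + 1) ^ 3 := calc
      #T ≤ #S * (#S * #S) := by
        rw [← card_product, ← card_product]
        exact card_filter_le _ _
      _ ≤ (4 * K + 1) * ((4 * K + 1) * (4 * K + 1)) := by gcongr
      _ = (4 * K + 1) ^ 3 := by ring
    exact_mod_cast this
  refine (unifProb_le_card_mul_chordProb (ι := Fin 2) T (a := fun t => ![x, t.2.1])
    (b := fun t => ![t.1, t.2.2]) (fun t ht => ?_) fun C hC => ?_).trans ?_
  · have hne := (mem_filter.1 ht).2
    intro i j hij
    fin_cases i <;> fin_cases j <;>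
      first | rfl | exact absurd hij hne | exact absurd hij.symm hne
  · obtain ⟨hx, u, hu, hxu⟩ := hC
    obtain ⟨v, hv, hCv, hne⟩ := exists_near_of_short_of_crosses hx hu hxu
    have hCx : C.1 x ∈ S := mem_near.2 (by unfold Short at hx; omega)
    refine ⟨(C.1 x, v, C.1 v), ?_, by simp [Fin.forall_fin_two]⟩
    simp only [hT, mem_filter, mem_product]
    exact ⟨⟨hCx, hv, hCv⟩, hne⟩
  · rw [Fintype.card_fin]
    exact mul_le_mul_of_nonneg_right hcard (chordProb_nonneg _ _)

lemma unifProb_exists_short_crosses_short_le (K : ℕ) :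
    unifProb (fun C : ChordDiagram n => ∃ x u, Short K C x ∧ Short K C u ∧ Crosses C x u) ≤
      2 * n * ((4 * K + 1) ^ 3 * chordProb (2 * n) 2) :=
  calc _ ≤ ∑ x : Fin (2 * n), unifProb fun C : ChordDiagram n =>
          Short K C x ∧ ∃ u, Short K C u ∧ Crosses C x u :=
        (unifProb_mono fun C ⟨x, u, hx, hu⟩ => ⟨x, mem_univ x, hx, u, hu⟩).trans
          (unifProb_exists_le_sum univ _)
    _ ≤ #(univ : Finset (Fin (2 * n))) • ((4 * K + 1) ^ 3 * chordProb (2 * n) 2) :=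
        sum_le_card_nsmul _ _ _ fun x _ => unifProb_exists_short_crosses_le K x
    _ = _ := by
        rw [card_univ, Fintype.card_fin, nsmul_eq_mul]
        push_cast
        ring

/-- The number of points on the shorter of the two arcs between `x` and `y`. -/
def arcLength (x y : Fin (2 * n)) : ℕ :=
  min (max (x : ℕ) y - min (x : ℕ) y - 1) (2 * n - (max (x : ℕ) y - min (x : ℕ) y) - 1)

lemma unifProb_arcLength_lt_le {o : Fin (2 * n)} (ho : (o : ℕ) = 0) (k : ℕ) :
    unifProb (fun C : ChordDiagram n => arcLength o (C.1 o) < k) ≤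
      (2 * k + 1) * chordProb (2 * n) 1 := by
  set Q : Finset (Fin (2 * n)) := {t | arcLength o t < k} with hQ
  have hcard : #Q ≤ 2 * k + 1 := by
    rw [← card_map Fin.valEmbedding]
    calc _ ≤ #(range (k + 1) ∪ Ico (2 * n - k) (2 * n)) :=
          card_le_card fun v hv => by
            simp only [hQ, Finset.mem_map, mem_filter_univ, Fin.valEmbedding_apply] at hv
            obtain ⟨t, ht, rfl⟩ := hv
            unfold arcLength at ht
            simp only [mem_union, mem_range, mem_Ico]
            omega
      _ ≤ (k + 1) + (2 * n - (2 * n - k)) :=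
          (card_union_le _ _).trans_eq (by rw [card_range, Nat.card_Ico])
      _ ≤ 2 * k + 1 := by omega
  calc unifProb (fun C : ChordDiagram n => arcLength o (C.1 o) < k)
      = unifProb fun C : ChordDiagram n => C.1 o ∈ Q :=
        unifProb_congr fun C => by rw [hQ, mem_filter_univ]
    _ ≤ #Q * chordProb (2 * n) 1 := unifProb_apply_mem_le o Q
    _ ≤ (2 * k + 1) * chordProb (2 * n) 1 :=
        mul_le_mul_of_nonneg_right (by exact_mod_cast hcard) (chordProb_nonneg _ _)

end RandomChordDiagram

/-! ### Reachability between long chords -/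

section LongChords

lemma exists_opposite_quadrants {α : Type*} {V : Finset α} {P Q : α → Prop} {l g : ℕ}
    (hP : l ≤ #{z ∈ V | P z}) (hP' : l ≤ #{z ∈ V | ¬ P z})
    (hQ : 4 * g ≤ #{z ∈ V | Q z}) (hQ' : 4 * g ≤ #{z ∈ V | ¬ Q z}) :
    ∃ A ⊆ V, ∃ B ⊆ V, (∀ p ∈ A, ∀ q ∈ B, (P p ↔ ¬ P q) ∧ (Q p ↔ ¬ Q q)) ∧
      min l (2 * g) ≤ 2 * #A ∧ 2 * g ≤ #B := by
  set a := #{z ∈ V | P z ∧ Q z} with ha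
  set b := #{z ∈ V | P z ∧ ¬ Q z} with hb
  set c := #{z ∈ V | ¬ P z ∧ Q z} with hc
  set d := #{z ∈ V | ¬ P z ∧ ¬ Q z} with hd
  have hab : a + b = #{z ∈ V | P z} := by
    rw [ha, hb, ← filter_filter, ← filter_filter, card_filter_add_card_filter_not]
  have hcd : c + d = #{z ∈ V | ¬ P z} := by
    rw [hc, hd, ← filter_filter, ← filter_filter, card_filter_add_card_filter_not]
  have hac : a + c = #{z ∈ V | Q z} := by
    rw [ha, hc, ← filter_filter, ← filter_filter, filter_comm P, filter_comm (¬ P ·),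
      card_filter_add_card_filter_not]
  have hbd : b + d = #{z ∈ V | ¬ Q z} := by
    rw [hb, hd, ← filter_filter, ← filter_filter, filter_comm P, filter_comm (¬ P ·),
      card_filter_add_card_filter_not]
  obtain h | h | h | h : (min l (2 * g) ≤ 2 * a ∧ 2 * g ≤ d) ∨ (min l (2 * g) ≤ 2 * b ∧ 2 * g ≤ c) ∨
      (min l (2 * g) ≤ 2 * c ∧ 2 * g ≤ b) ∨ (min l (2 * g) ≤ 2 * d ∧ 2 * g ≤ a) := by omega
  all_goals
    refine ⟨_, filter_subset _ _, _, filter_subset _ _, fun p hp q hq => ?_, h⟩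
    rw [mem_filter] at hp hq
    tauto

variable {n : ℕ}

lemma arcLength_le_card_between (x y : Fin (2 * n)) : arcLength x y ≤ #{z | Between x y z} := by
  have h : ({z | Between x y z} : Finset (Fin (2 * n))) = Ioo (min x y) (max x y) := by
    ext z
    rw [mem_filter_univ, mem_Ioo, Between]
  rw [h, Fin.card_Ioo, arcLength, Fin.coe_min, Fin.coe_max]
  exact min_le_left _ _

lemma arcLength_le_card_not_between (x y : Fin (2 * n)) :
    arcLength x y ≤ #{z | ¬ Between x y z} := by
  have h : ({z | ¬ Between x y z} : Finset (Fin (2 * n))) = (Ioo (min x y) (max x y))ᶜ := by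
    ext z
    rw [mem_filter_univ, mem_compl, mem_Ioo, Between]
  rw [h, card_compl, Fin.card_Ioo, Fintype.card_fin, arcLength, Fin.coe_min, Fin.coe_max]
  omega

lemma card_filter_sub_card_le {α : Type*} [DecidableEq α] (s t : Finset α) (P : α → Prop)
    [DecidablePred P] : #{z ∈ s | P z} - #t ≤ #{z ∈ s \ t | P z} := by
  have h : {z ∈ s \ t | P z} = {z ∈ s | P z} \ t := by grind
  rw [h]
  exact le_card_sdiff _ _

lemma unifProb_not_mutualReach_le_pow {C : ChordDiagram n} {x y : Fin (2 * n)}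
    {A B : Finset (Fin (2 * n))} (hxy : chordRep C x ≠ chordRep C y) (hAB : Disjoint A B)
    (hx : ∀ p ∈ A, C.1 p ∈ B → Crosses C x p) (hy : ∀ p ∈ A, C.1 p ∈ B → Crosses C y p) :
    unifProb (fun ω => ¬ MutualReach (C, Function.curry ω) x y) ≤
      2 * (3 / 4) ^ #{p ∈ A | C.1 p ∈ B} := by
  set T := {p ∈ A | C.1 p ∈ B}
  have hT : ∀ p ∈ T, Crosses C x p ∧ Crosses C y p := fun p hp =>
    ⟨hx p (mem_filter.1 hp).1 (mem_filter.1 hp).2, hy p (mem_filter.1 hp).1 (mem_filter.1 hp).2⟩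
  have hrep : ∀ {z p}, Crosses C z p → chordRep C p ≠ chordRep C z := fun h heq =>
    (chordRep_eq_iff.1 heq.symm).elim h.ne h.ne_apply
  have hinj : Set.InjOn (chordRep C) T := fun p hp q hq hpq =>
    ((chordRep_eq_iff.1 hpq).resolve_right fun h =>
      disjoint_left.1 hAB (mem_filter.1 hq).1 (h ▸ (mem_filter.1 hp).2)).symm
  have hpath : ∀ {ω z w}, (∀ p ∈ T, Crosses C z p ∧ Crosses C w p) →
      (∃ p ∈ T, CoinOver ω (chordRep C z) (chordRep C p) ∧
        CoinOver ω (chordRep C p) (chordRep C w)) →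
      ReachChord (C, Function.curry ω) z w := fun h ⟨p, hp, hzp, hpw⟩ =>
    (overD_curry.2 ⟨(h p hp).1, hzp⟩).reachChord.trans
      (overD_curry.2 ⟨(h p hp).2.symm, hpw⟩).reachChord
  calc unifProb (fun ω => ¬ MutualReach (C, Function.curry ω) x y)
      ≤ unifProb fun ω => (∀ p ∈ T, ¬ (CoinOver ω (chordRep C x) (chordRep C p) ∧
            CoinOver ω (chordRep C p) (chordRep C y))) ∨
          ∀ p ∈ T, ¬ (CoinOver ω (chordRep C y) (chordRep C p) ∧
            CoinOver ω (chordRep C p) (chordRep C x)) := by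
        refine unifProb_mono fun ω h => ?_
        contrapose! h
        exact ⟨hpath hT h.1, hpath (fun p hp => (hT p hp).symm) h.2⟩
    _ ≤ (3 / 4) ^ #T + (3 / 4) ^ #T := by
        refine (unifProb_or_le _ _).trans_eq (congrArg₂ _ ?_ ?_)
        · exact unifProb_forall_not_coinOver_path T hxy hinj (fun p hp => hrep (hT p hp).1)
            fun p hp => hrep (hT p hp).2
        · exact unifProb_forall_not_coinOver_path T hxy.symm hinj (fun p hp => hrep (hT p hp).2)
            fun p hp => hrep (hT p hp).1
    _ = 2 * (3 / 4) ^ #T := (two_mul _).symm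

lemma mutualReach_of_chordRep_eq {D : OrientedChordDiagram n} {x o : Fin (2 * n)}
    (h : chordRep D.1 x = chordRep D.1 o) : MutualReach D x o := by
  rcases chordRep_eq_iff.1 h with rfl | rfl
  · exact ⟨reachChord_self, reachChord_self⟩
  · exact mutualReach_apply

lemma ne_of_arcLength_pos {x y : Fin (2 * n)} (h : 0 < arcLength x y) : x ≠ y := by
  rintro rfl
  unfold arcLength at h
  omega

lemma exists_sdiff_opposite {x y o t : Fin (2 * n)} {U : Finset (Fin (2 * n))} {l g : ℕ}
    (hU : #U ≤ 4) (hxy : l ≤ arcLength x y - 4) (hot : 4 * g ≤ arcLength o t - 4) :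
    ∃ A ⊆ univ \ U, ∃ B ⊆ univ \ U, (∀ p ∈ A, ∀ q ∈ B,
      (Between x y p ↔ ¬ Between x y q) ∧ (Between o t p ↔ ¬ Between o t q)) ∧
      min l (2 * g) ≤ 2 * #A ∧ 2 * g ≤ #B := by
  have hcard : ∀ {k a : ℕ} {P : Fin (2 * n) → Prop} [DecidablePred P], k ≤ a - 4 → a ≤ #{z | P z} →
      k ≤ #{z ∈ univ \ U | P z} := fun hk ha =>
    le_trans (by omega) (card_filter_sub_card_le univ U _)
  exact exists_opposite_quadrants (hcard hxy (arcLength_le_card_between x y))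
    (hcard hxy (arcLength_le_card_not_between x y)) (hcard hot (arcLength_le_card_between o t))
    (hcard hot (arcLength_le_card_not_between o t))

lemma unifProb_not_mutualReach_le_of_opposite {C : ChordDiagram n} {x o : Fin (2 * n)}
    {A B : Finset (Fin (2 * n))} (hxo : chordRep C x ≠ chordRep C o)
    (hopp : ∀ p ∈ A, ∀ q ∈ B, (Between x (C.1 x) p ↔ ¬ Between x (C.1 x) q) ∧
      (Between o (C.1 o) p ↔ ¬ Between o (C.1 o) q)) :
    unifProb (fun ω => ¬ MutualReach (C, Function.curry ω) x o) ≤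
      2 * (3 / 4) ^ #{p ∈ A | C.1 p ∈ B} :=
  unifProb_not_mutualReach_le_pow hxo
    (disjoint_left.2 fun p hpA hpB => not_iff_self (hopp p hpA p hpB).1.symm)
    (fun p hp hCp => crosses_iff.2 fun h => not_iff_self (h.symm.trans (hopp p hp _ hCp).1).symm)
    fun p hp hCp => crosses_iff.2 fun h => not_iff_self (h.symm.trans (hopp p hp _ hCp).2).symm

lemma unifProb_apply_eq_and_not_mutualReach_le_ite {C : ChordDiagram n} {x y o t : Fin (2 * n)}
    (hdisj : Disjoint ({x, y} : Finset (Fin (2 * n))) {o, t}) {A B : Finset (Fin (2 * n))}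
    (hopp : ∀ p ∈ A, ∀ q ∈ B,
      (Between x y p ↔ ¬ Between x y q) ∧ (Between o t p ↔ ¬ Between o t q)) :
    unifProb (fun ω => (C.1 x = y ∧ C.1 o = t) ∧ ¬ MutualReach (C, Function.curry ω) x o) ≤
      2 * if C.1 x = y ∧ C.1 o = t then (3 / 4) ^ #{p ∈ A | C.1 p ∈ B} else 0 := by
  split_ifs with h
  · obtain ⟨rfl, rfl⟩ := h
    exact (unifProb_mono fun ω => And.right).trans
      (unifProb_not_mutualReach_le_of_opposite (disjoint_pair_iff_chordRep_ne.1 hdisj) hopp)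
  · rw [mul_zero, unifProb_congr fun ω => iff_false_intro fun hω => h hω.1, unifProb_false]

lemma expect_apply_eq_pow_card_le {x y o t : Fin (2 * n)} (hxy : x ≠ y) (hot : o ≠ t)
    (hdisj : Disjoint ({x, y} : Finset (Fin (2 * n))) {o, t}) {A B : Finset (Fin (2 * n))}
    (hA : A ⊆ univ \ ({x, y} ∪ {o, t})) (hB : B ⊆ univ \ ({x, y} ∪ {o, t})) (hAB : Disjoint A B)
    {θ η : ℝ} (hθ₀ : 0 ≤ θ) (hθ₁ : θ ≤ 1) (hη₀ : 0 ≤ η) (hη₁ : η ≤ 1) {m : ℕ} (hmA : 2 * m ≤ #A)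
    (hmB : m + η * (2 * n) ≤ #B) :
    𝔼 C : ChordDiagram n, (if C.1 x = y ∧ C.1 o = t then θ ^ #{p ∈ A | C.1 p ∈ B} else 0) ≤
      chordProb (2 * n) 2 * (1 - (1 - θ) * η) ^ m := by
  have hU : (univ : Finset (Fin 2)).biUnion (fun k => {![x, o] k, ![y, t] k}) =
      ({x, y} ∪ {o, t} : Finset (Fin (2 * n))) := by
    ext z
    simp only [mem_biUnion, mem_univ, true_and, Fin.exists_fin_two, mem_union]
    rfl
  have hpairs : ((univ : Finset (Fin 2)) : Set (Fin 2)).PairwiseDisjoint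
      fun k => ({![x, o] k, ![y, t] k} : Finset (Fin (2 * n))) := by
    intro k _ l _ hkl
    fin_cases k <;> fin_cases l <;>
      first | exact absurd rfl hkl | exact hdisj | exact hdisj.symm
  have h := expect_matchings_forall_eq_pow_card_le (univ : Finset (Fin 2))
    (by simpa [Fin.forall_fin_two] using ⟨hxy, hot⟩) hpairs (V := univ) (by simp)
    (fun k _ => subset_univ _) (hU ▸ hA) (hU ▸ hB) hAB hθ₀ hθ₁ hη₀ hη₁ hmA
    (by simpa using hmB)
  refine (le_of_eq ?_).trans (h.trans_eq (by simp))
  rw [expect_chordDiagram fun f => if f x = y ∧ f o = t then θ ^ #{p ∈ A | f p ∈ B} else 0]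
  refine expect_congr rfl fun f _ => ?_
  simp [Fin.forall_fin_two]

lemma unifProb_apply_eq_and_not_mutualReach_le {x y o t : Fin (2 * n)} {m g : ℕ} {η : ℝ}
    (hη₀ : 0 ≤ η) (hη₁ : η ≤ 1) (hne : x ≠ y) (hxy : 4 * m ≤ arcLength x y - 4)
    (hot : 4 * g + 4 ≤ arcLength o t) (hmg : 2 * m ≤ g) (hηg : η * (2 * n) ≤ g) :
    unifProb (fun D : OrientedChordDiagram n =>
        (D.1.1 x = y ∧ D.1.1 o = t) ∧ ¬ MutualReach D x o) ≤
      2 * chordProb (2 * n) 2 * (1 - η / 4) ^ m := by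
  by_cases hdisj : Disjoint ({x, y} : Finset (Fin (2 * n))) {o, t}
  · obtain ⟨A, hA, B, hB, hopp, hmA, hgB⟩ := exists_sdiff_opposite
      ((card_union_le {x, y} {o, t}).trans (add_le_add card_le_two card_le_two)) hxy
      (Nat.le_sub_of_add_le hot)
    have hgB' : (2 * g : ℝ) ≤ #B := by exact_mod_cast hgB
    have hmg' : (2 * m : ℝ) ≤ g := by exact_mod_cast hmg
    calc _ ≤ 𝔼 C : ChordDiagram n,
            2 * if C.1 x = y ∧ C.1 o = t then (3 / 4 : ℝ) ^ #{p ∈ A | C.1 p ∈ B} else 0 := by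
          rw [unifProb_orientedChordDiagram]
          exact expect_le_expect fun C _ =>
            unifProb_apply_eq_and_not_mutualReach_le_ite hdisj hopp
      _ ≤ 2 * (chordProb (2 * n) 2 * (1 - (1 - 3 / 4) * η) ^ m) := by
          rw [← mul_expect]
          exact mul_le_mul_of_nonneg_left (expect_apply_eq_pow_card_le
            hne (ne_of_arcLength_pos (by omega)) hdisj hA hB
            (disjoint_left.2 fun p hpA hpB => not_iff_self (hopp p hpA p hpB).1.symm)
            (by norm_num) (by norm_num) hη₀ hη₁ (by omega) (by linarith)) zero_le_two
      _ = 2 * chordProb (2 * n) 2 * (1 - η / 4) ^ m := by ring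
  · rw [unifProb_congr fun D => iff_false_intro ?_, unifProb_false]
    · exact mul_nonneg (mul_nonneg zero_le_two (chordProb_nonneg _ _))
        (pow_nonneg (by linarith) _)
    · rintro ⟨⟨rfl, rfl⟩, h⟩
      rw [disjoint_pair_iff_chordRep_ne, not_not] at hdisj
      exact h (mutualReach_of_chordRep_eq hdisj)

variable {K : ℕ} {δ : ℝ}

lemma sum_pow_le_of_injOn {ι : Type*} {s : Finset ι} {f : ι → ℕ} {k : ℕ} {r : ℝ} (hr₀ : 0 ≤ r)
    (hr₁ : r < 1) (hf : Set.InjOn f s) (hk : ∀ a ∈ s, k ≤ f a) :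
    ∑ a ∈ s, r ^ f a ≤ r ^ k / (1 - r) :=
  calc ∑ a ∈ s, r ^ f a = ∑ j ∈ s.image f, r ^ j := (sum_image hf).symm
    _ ≤ ∑ j ∈ Ico k (s.sup f + 1), r ^ j :=
        sum_le_sum_of_subset_of_nonneg (fun j hj => by
          obtain ⟨a, ha, rfl⟩ := mem_image.1 hj
          exact mem_Ico.2 ⟨hk a ha, Nat.lt_succ_of_le (le_sup ha)⟩) fun _ _ _ => pow_nonneg hr₀ _
    _ ≤ r ^ k / (1 - r) := geom_sum_Ico_le_of_lt_one hr₀ hr₁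

lemma pow_min_arcLength_le (hδ₀ : 0 ≤ δ) (hδ : δ ≤ 1 / 16) {x y : Fin (2 * n)} (hxy : x < y)
    (g : ℕ) :
    (1 - 4 * δ) ^ min ((arcLength x y - 4) / 4) (g / 2) ≤
      2 * ((1 - δ) ^ (y - x : ℕ) + (1 - δ) ^ (x + (2 * n - y) : ℕ) + (1 - δ) ^ (2 * g)) := by
  have hσ : ∀ k, 0 ≤ (1 - δ) ^ k := fun k => pow_nonneg (by linarith) k
  have hbernoulli : ∀ k : ℕ, 1 - k * δ ≤ (1 - δ) ^ k := fun k => by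
    have := one_add_mul_le_pow (a := -δ) (by linarith) k
    rwa [mul_neg, ← sub_eq_add_neg, ← sub_eq_add_neg] at this
  have hdrop : ∀ {k l : ℕ}, l ≤ 4 * k + 8 → (1 - 4 * δ) ^ k ≤ 2 * (1 - δ) ^ l := fun {k l} hl =>
    calc (1 - 4 * δ) ^ k ≤ ((1 - δ) ^ 4) ^ k :=
          pow_le_pow_left₀ (by linarith) (by exact_mod_cast hbernoulli 4) k
      _ ≤ 2 * (1 - δ) ^ (4 * k + 8) := by
          have h8 : 1 - 8 * δ ≤ (1 - δ) ^ 8 := by exact_mod_cast hbernoulli 8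
          rw [← pow_mul, pow_add]
          nlinarith [hσ (4 * k)]
      _ ≤ 2 * (1 - δ) ^ l := mul_le_mul_of_nonneg_left
          (pow_le_pow_of_le_one (by linarith) (by linarith) hl) zero_le_two
  set m := min ((arcLength x y - 4) / 4) (g / 2) with hm
  obtain h | h | h :
      (y - x : ℕ) ≤ 4 * m + 8 ∨ (x + (2 * n - y) : ℕ) ≤ 4 * m + 8 ∨ 2 * g ≤ 4 * m + 8 := by
    have := Fin.lt_def.1 hxy
    unfold arcLength at hm
    omega
  all_goals linarith [hdrop h, hσ (y - x), hσ (x + (2 * n - y)), hσ (2 * g)]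

lemma sum_pow_add_sub_le {σ : ℝ} (hσ₀ : 0 ≤ σ) (hσ₁ : σ < 1)
    (S : Fin (2 * n) → Finset (Fin (2 * n))) :
    ∑ x, ∑ y ∈ S x, σ ^ (x + (2 * n - y) : ℕ) ≤ (1 - σ)⁻¹ ^ 2 := by
  have hinv : ∀ {f : Fin (2 * n) → ℕ}, Function.Injective f → ∑ y, σ ^ f y ≤ (1 - σ)⁻¹ :=
    fun hf => by
      simpa using sum_pow_le_of_injOn (k := 0) hσ₀ hσ₁ hf.injOn (s := univ) fun _ _ => Nat.zero_le _
  calc _ ≤ ∑ x : Fin (2 * n), ∑ y : Fin (2 * n), σ ^ (x : ℕ) * σ ^ (2 * n - y : ℕ) := by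
        simp only [← pow_add]
        exact sum_le_sum fun x _ => sum_le_sum_of_subset_of_nonneg (subset_univ _)
          fun _ _ _ => pow_nonneg hσ₀ _
    _ = (∑ x : Fin (2 * n), σ ^ (x : ℕ)) * ∑ y : Fin (2 * n), σ ^ (2 * n - y : ℕ) := by
        rw [sum_mul_sum]
    _ ≤ (1 - σ)⁻¹ ^ 2 := by
        rw [sq]
        exact mul_le_mul (hinv Fin.val_injective) (hinv fun y z h => by omega)
          (sum_nonneg fun _ _ => pow_nonneg hσ₀ _) (inv_nonneg.2 (by linarith))

lemma sum_pow_span_le {σ : ℝ} (hσ₀ : 0 ≤ σ) (hσ₁ : σ < 1) (g : ℕ)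
    {S : Fin (2 * n) → Finset (Fin (2 * n))} (hS : ∀ x, ∀ y ∈ S x, (x : ℕ) + K < y) :
    ∑ x, ∑ y ∈ S x,
        (σ ^ (y - x : ℕ) + σ ^ (x + (2 * n - y) : ℕ) + σ ^ (2 * g)) ≤
      2 * n * (σ ^ K / (1 - σ)) + (1 - σ)⁻¹ ^ 2 + (2 * n) ^ 2 * σ ^ (2 * g) := by
  have hspan : ∀ x : Fin (2 * n), ∑ y ∈ S x, σ ^ (y - x : ℕ) ≤
      σ ^ K / (1 - σ) := fun x => by
    refine sum_pow_le_of_injOn hσ₀ hσ₁ (fun y hy z hz h => ?_) fun y hy => ?_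
    · have := hS x y hy
      have := hS x z hz
      omega
    · have := hS x y hy
      omega
  have hconst : ∑ x, ∑ _y ∈ S x, σ ^ (2 * g) ≤
      (2 * n) ^ 2 * σ ^ (2 * g) :=
    calc _ ≤ ∑ _x : Fin (2 * n), ∑ _y : Fin (2 * n), σ ^ (2 * g) :=
          sum_le_sum fun x _ => sum_le_sum_of_subset_of_nonneg (subset_univ _)
            fun _ _ _ => pow_nonneg hσ₀ _
      _ = (2 * n) ^ 2 * σ ^ (2 * g) := by
          simp only [sum_const, card_univ, Fintype.card_fin, nsmul_eq_mul]
          push_cast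
          ring
  have hspan' := sum_le_card_nsmul univ _ _ fun x _ => hspan x
  rw [card_univ, Fintype.card_fin, nsmul_eq_mul] at hspan'
  push_cast at hspan'
  simp only [sum_add_distrib]
  exact add_le_add (add_le_add hspan' (sum_pow_add_sub_le hσ₀ hσ₁ S)) hconst

lemma exists_lt_apply_of_not_short {D : OrientedChordDiagram n} {x o : Fin (2 * n)}
    (hs : ¬ Short K D.1 x) (hx : ¬ MutualReach D x o) :
    ∃ z : Fin (2 * n), (z : ℕ) + K < D.1.1 z ∧ ¬ MutualReach D z o := by
  unfold Short at hs
  rcases lt_or_ge ((x : ℕ) + K) (D.1.1 x) with h | h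
  · exact ⟨x, h, hx⟩
  · exact ⟨D.1.1 x, by rw [D.1.2.1]; omega, fun h => hx (mutualReach_apply.trans h)⟩

lemma unifProb_apply_eq_and_not_mutualReach_le_span (hδ₀ : 0 ≤ δ) (hδ : δ ≤ 1 / 16) {g : ℕ}
    {x y o t : Fin (2 * n)} (hxy : x < y) (hot : 4 * g + 4 ≤ arcLength o t)
    (hg : 16 * δ * (2 * n) ≤ g) :
    unifProb (fun D : OrientedChordDiagram n =>
        (D.1.1 x = y ∧ D.1.1 o = t) ∧ ¬ MutualReach D x o) ≤
      4 * chordProb (2 * n) 2 *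
        ((1 - δ) ^ (y - x : ℕ) + (1 - δ) ^ (x + (2 * n - y) : ℕ) + (1 - δ) ^ (2 * g)) := by
  refine (unifProb_apply_eq_and_not_mutualReach_le (by linarith : 0 ≤ 16 * δ) (by linarith)
    hxy.ne (m := min ((arcLength x y - 4) / 4) (g / 2)) (by omega) hot (by omega) hg).trans ?_
  have h := pow_min_arcLength_le hδ₀ hδ hxy g
  rw [show 16 * δ / 4 = 4 * δ by ring]
  nlinarith [chordProb_nonneg (2 * n) 2]

lemma unifProb_exists_not_mutualReach_le (hδ₀ : 0 < δ) (hδ : δ ≤ 1 / 16) {g : ℕ}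
    (hg : 16 * δ * (2 * n) ≤ g) (K : ℕ) (o : Fin (2 * n)) :
    unifProb (fun D : OrientedChordDiagram n => 4 * g + 4 ≤ arcLength o (D.1.1 o) ∧
        ∃ x, ¬ Short K D.1 x ∧ ¬ MutualReach D x o) ≤
      8 * n * chordProb (2 * n) 2 *
        (2 * n * ((1 - δ) ^ K / δ) + δ⁻¹ ^ 2 + (2 * n) ^ 2 * (1 - δ) ^ (2 * g)) := by
  set S : Fin (2 * n) → Finset (Fin (2 * n)) := fun x => {y | (x : ℕ) + K < y}
  set T : Finset (Fin (2 * n)) := {t | 4 * g + 4 ≤ arcLength o t}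
  have hS : ∀ x y, y ∈ S x ↔ (x : ℕ) + K < y := fun x y => mem_filter_univ y
  have hT : ∀ t, t ∈ T ↔ 4 * g + 4 ≤ arcLength o t := fun t => mem_filter_univ t
  set b : Fin (2 * n) → Fin (2 * n) → ℝ := fun x y =>
    (1 - δ) ^ (y - x : ℕ) + (1 - δ) ^ (x + (2 * n - y) : ℕ) + (1 - δ) ^ (2 * g)
  calc _ ≤ unifProb fun D : OrientedChordDiagram n => ∃ p ∈ univ.sigma S ×ˢ T,
          (D.1.1 p.1.1 = p.1.2 ∧ D.1.1 o = p.2) ∧ ¬ MutualReach D p.1.1 o := by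
        refine unifProb_mono fun D ⟨ho, x, hs, hx⟩ => ?_
        obtain ⟨z, hz, hzo⟩ := exists_lt_apply_of_not_short hs hx
        exact ⟨(⟨z, D.1.1 z⟩, D.1.1 o), mem_product.2
          ⟨mem_sigma.2 ⟨mem_univ z, (hS _ _).2 hz⟩, (hT _).2 ho⟩, ⟨rfl, rfl⟩, hzo⟩
    _ ≤ ∑ p ∈ univ.sigma S ×ˢ T, 4 * chordProb (2 * n) 2 * b p.1.1 p.1.2 := by
        refine (unifProb_exists_le_sum _ _).trans (sum_le_sum fun p hp => ?_)
        obtain ⟨hs, ht⟩ := mem_product.1 hp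
        have hlt := (hS _ _).1 (mem_sigma.1 hs).2
        exact unifProb_apply_eq_and_not_mutualReach_le_span hδ₀.le hδ
          (Fin.lt_def.2 (by omega)) ((hT _).1 ht) hg
    _ = #T * (4 * chordProb (2 * n) 2 * ∑ x, ∑ y ∈ S x, b x y) := by
        rw [sum_product]
        simp only [sum_const, nsmul_eq_mul, ← mul_sum, sum_sigma]
    _ ≤ 2 * n * (4 * chordProb (2 * n) 2 * (2 * n * ((1 - δ) ^ K / (1 - (1 - δ))) +
          (1 - (1 - δ))⁻¹ ^ 2 + (2 * n) ^ 2 * (1 - δ) ^ (2 * g))) := by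
        have hcard : (#T : ℝ) ≤ 2 * n := by
          exact_mod_cast (card_le_univ T).trans_eq (Fintype.card_fin _)
        have hprob : 0 ≤ 4 * chordProb (2 * n) 2 := mul_nonneg (by norm_num) (chordProb_nonneg _ _)
        have hσ : 0 ≤ 1 - δ := by linarith
        exact mul_le_mul hcard (mul_le_mul_of_nonneg_left
          (sum_pow_span_le hσ (by linarith) g fun x y hy => (hS x y).1 hy) hprob)
          (mul_nonneg hprob (sum_nonneg fun x _ => sum_nonneg fun y _ => by positivity))
          (by positivity)
    _ = _ := by
        rw [sub_sub_cancel]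
        ring

end LongChords

/-! ### Typical diagrams with high probability -/

section TypicalWhp

variable {n K g : ℕ} {δ : ℝ}

lemma isTypical_of_arcLength {D : OrientedChordDiagram n} {o p : Fin (2 * n)} (ho : (o : ℕ) = 0)
    (hp : (p : ℕ) = 1) (hK : K ≤ 4 * g + 4) (harc : 4 * g + 4 ≤ arcLength o (D.1.1 o))
    (hreach : ¬ ∃ x, ¬ Short K D.1 x ∧ ¬ MutualReach D x o)
    (hcross : ¬ ∃ x u, Short K D.1 x ∧ Short K D.1 u ∧ Crosses D.1 x u)
    (hshort : ¬ Short K D.1 p) : IsTypical K D o := by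
  push Not at hreach hcross
  unfold arcLength at harc
  refine ⟨hreach, hcross, fun h => ?_, p, hshort, fun h => ?_, fun h => ?_⟩
  · unfold Short at h
    omega
  · omega
  · rw [← h] at harc
    omega

lemma unifProb_not_isTypical_le (hδ₀ : 0 < δ) (hδ : δ ≤ 1 / 16) (hg : 16 * δ * (2 * n) ≤ g)
    (hK : K ≤ 4 * g + 4) (hn : 2 ≤ n) :
    unifProb (fun D : OrientedChordDiagram n => ¬ ∃ o, IsTypical K D o) ≤
      (2 * ↑(4 * g + 4) + 1) * chordProb (2 * n) 1 +
      8 * n * chordProb (2 * n) 2 *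
        (2 * n * ((1 - δ) ^ K / δ) + δ⁻¹ ^ 2 + (2 * n) ^ 2 * (1 - δ) ^ (2 * g)) +
      2 * n * ((4 * K + 1) ^ 3 * chordProb (2 * n) 2) + (2 * K + 1) * chordProb (2 * n) 1 := by
  let o : Fin (2 * n) := ⟨0, by omega⟩
  let p : Fin (2 * n) := ⟨1, by omega⟩
  calc _ ≤ unifProb fun D : OrientedChordDiagram n =>
          ((arcLength o (D.1.1 o) < 4 * g + 4 ∨ (4 * g + 4 ≤ arcLength o (D.1.1 o) ∧
            ∃ x, ¬ Short K D.1 x ∧ ¬ MutualReach D x o)) ∨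
          ∃ x u, Short K D.1 x ∧ Short K D.1 u ∧ Crosses D.1 x u) ∨ Short K D.1 p := by
        refine unifProb_mono fun D h => ?_
        contrapose! h
        obtain ⟨⟨⟨harc, hreach⟩, hcross⟩, hshort⟩ := h
        exact ⟨o, isTypical_of_arcLength rfl rfl hK harc (by push Not; exact hreach harc)
          (by push Not; exact hcross) hshort⟩
    _ ≤ _ := by
        refine (unifProb_or_le _ _).trans (add_le_add ((unifProb_or_le _ _).trans (add_le_add
          ((unifProb_or_le _ _).trans (add_le_add ?_
            (unifProb_exists_not_mutualReach_le hδ₀ hδ hg K o))) ?_)) ?_)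
        · rw [unifProb_fst fun C => arcLength o (C.1 o) < 4 * g + 4]
          exact unifProb_arcLength_lt_le rfl _
        · rw [unifProb_fst fun C => ∃ x u, Short K C x ∧ Short K C u ∧ Crosses C x u]
          exact unifProb_exists_short_crosses_short_le K
        · rw [unifProb_fst fun C => Short K C p]
          exact unifProb_short_le K p

lemma tendsto_natCeil_mul_atTop {a : ℝ} (ha : 0 < a) :
    Tendsto (fun n : ℕ => ⌈a * n⌉₊) atTop atTop :=
  tendsto_nat_ceil_atTop.comp (tendsto_natCast_atTop_atTop.const_mul_atTop ha)

lemma tendsto_mul_pow_natCeil {a r : ℝ} (ha : 0 < a) (hr₀ : 0 ≤ r) (hr₁ : r < 1) :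
    Tendsto (fun n : ℕ => n * r ^ ⌈a * n⌉₊) atTop (𝓝 0) := by
  have h := ((tendsto_self_mul_const_pow_of_lt_one hr₀ hr₁).comp
    (tendsto_natCeil_mul_atTop ha)).const_mul a⁻¹
  rw [mul_zero] at h
  refine squeeze_zero (fun n => by positivity) (fun n => ?_) h
  have hceil : (n : ℝ) ≤ a⁻¹ * ⌈a * n⌉₊ := by
    rw [inv_mul_eq_div, le_div_iff₀ ha, mul_comm]
    exact Nat.le_ceil _
  calc (n : ℝ) * r ^ ⌈a * n⌉₊ ≤ a⁻¹ * ⌈a * n⌉₊ * r ^ ⌈a * n⌉₊ :=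
        mul_le_mul_of_nonneg_right hceil (by positivity)
    _ = _ := mul_assoc _ _ _

lemma eventually_unifProb_not_isTypical_le (hδ₀ : 0 < δ) (hδ : δ ≤ 1 / 16) (K : ℕ) :
    ∀ᶠ n : ℕ in atTop, unifProb (fun D : OrientedChordDiagram n => ¬ ∃ o, IsTypical K D o) ≤
      256 * δ + 16 * (1 - δ) ^ K / δ + ((8 * δ⁻¹ ^ 2 + 2 * (4 * K + 1) ^ 3 + 2 * K + 18) / n +
        32 * (n * ((1 - δ) ^ 2) ^ ⌈32 * δ * n⌉₊)) := by
  filter_upwards [eventually_ge_atTop 4,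
    (tendsto_natCeil_mul_atTop (mul_pos (by norm_num : (0 : ℝ) < 32) hδ₀)).eventually_ge_atTop K]
    with n hn hK
  set g := ⌈32 * δ * n⌉₊
  have hn₀ : (0 : ℝ) < n := by exact_mod_cast (by omega : 0 < n)
  have hσ : 0 ≤ 1 - δ := by linarith
  have hg : (g : ℝ) ≤ 32 * δ * n + 1 := (Nat.ceil_lt_add_one (by positivity)).le
  refine (unifProb_not_isTypical_le hδ₀ hδ (by linarith [Nat.le_ceil (32 * δ * n)])
    (by omega : K ≤ 4 * g + 4) (by omega)).trans ?_
  have h₁ : chordProb (2 * n) 1 ≤ (n : ℝ)⁻¹ := by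
    simpa using chordProb_le_inv_pow (r := 1) (by omega)
  have h₂ : chordProb (2 * n) 2 ≤ ((n : ℝ) ^ 2)⁻¹ := chordProb_le_inv_pow (by omega)
  calc _ ≤ (2 * ↑(4 * g + 4) + 1) * (n : ℝ)⁻¹ + 8 * n * ((n : ℝ) ^ 2)⁻¹ *
            (2 * n * ((1 - δ) ^ K / δ) + δ⁻¹ ^ 2 + (2 * n) ^ 2 * (1 - δ) ^ (2 * g)) +
          2 * n * ((4 * K + 1) ^ 3 * ((n : ℝ) ^ 2)⁻¹) + (2 * K + 1) * (n : ℝ)⁻¹ := by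
        gcongr
    _ = (8 * g + 9) / n + 16 * (1 - δ) ^ K / δ + ((8 * δ⁻¹ ^ 2 + 2 * (4 * K + 1) ^ 3 + 2 * K + 1) /
          n + 32 * (n * ((1 - δ) ^ 2) ^ g)) := by
        rw [pow_mul]
        push_cast
        field_simp
        ring
    _ ≤ _ := by
        have hlin : (8 * g + 9) / (n : ℝ) ≤ 256 * δ + 17 / n := by
          rw [div_le_iff₀ hn₀, add_mul, div_mul_cancel₀ _ hn₀.ne']
          linarith
        rw [add_div _ 18, add_div _ 1]
        linarith [show 17 / (n : ℝ) + 1 / n = 18 / n by ring]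

lemma eventually_eventually_unifProb_not_isTypical_le {ε : ℝ} (hε : 0 < ε) :
    ∀ᶠ K in atTop, ∀ᶠ n in atTop,
      unifProb (fun D : OrientedChordDiagram n => ¬ ∃ o, IsTypical K D o) ≤ ε := by
  obtain ⟨δ, hδ₀, hδ⟩ : ∃ δ : ℝ, 0 < δ ∧ δ ≤ min (1 / 16) (ε / 1024) :=
    ⟨_, lt_min (by norm_num) (by positivity), le_rfl⟩
  obtain ⟨hδ₁, hδε⟩ := le_min_iff.1 hδ
  have hσ₀ : 0 ≤ 1 - δ := by linarith
  have hσ : Tendsto (fun K : ℕ => 16 * (1 - δ) ^ K / δ) atTop (𝓝 (16 * 0 / δ)) :=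
    ((tendsto_pow_atTop_nhds_zero_of_lt_one hσ₀ (by linarith)).const_mul 16).div_const δ
  rw [mul_zero, zero_div] at hσ
  filter_upwards [hσ.eventually_le_const (by positivity : 0 < ε / 4)] with K hK
  have herr := (tendsto_const_div_atTop_nhds_zero_nat
    (8 * δ⁻¹ ^ 2 + 2 * (4 * K + 1) ^ 3 + 2 * K + 18 : ℝ)).add
    ((tendsto_mul_pow_natCeil (mul_pos (by norm_num : (0 : ℝ) < 32) hδ₀)
      (sq_nonneg (1 - δ)) (by nlinarith)).const_mul 32)
  rw [mul_zero, add_zero] at herr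
  filter_upwards [eventually_unifProb_not_isTypical_le hδ₀ hδ₁ K,
    herr.eventually_le_const (by positivity : 0 < ε / 2)] with n hn hn'
  linarith

end TypicalWhp

/-! ### Extreme short chords -/

section Innermost

variable {n : ℕ} {C : ChordDiagram n} {x : Fin (2 * n)}

/-- `x` is the left endpoint of its chord and no chord has both endpoints under it, so that every
point in between belongs to a different crossing chord. -/
def Innermost (C : ChordDiagram n) (x : Fin (2 * n)) : Prop :=
  x < C.1 x ∧ ∀ t ∈ Ioo x (C.1 x), C.1 t ∉ Ioo x (C.1 x)

namespace Innermost

lemma crosses_iff (h : Innermost C x) {u : Fin (2 * n)} :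
    Crosses C x u ↔ u ∈ Ioo x (C.1 x) ∨ C.1 u ∈ Ioo x (C.1 x) := by
  have hu := h.2 u
  rw [_root_.crosses_iff, Between, Between, min_eq_left h.1.le, max_eq_right h.1.le, ← mem_Ioo,
    ← mem_Ioo]
  tauto

lemma chordRep_eq (h : Innermost C x) : chordRep C x = x := min_eq_left h.1.le

lemma chordRep_ne (h : Innermost C x) {t : Fin (2 * n)} (ht : t ∈ Ioo x (C.1 x)) :
    chordRep C t ≠ x := fun heq => by
  have hcross := h.crosses_iff.2 (Or.inl ht)
  rw [← h.chordRep_eq, eq_comm, chordRep_eq_iff] at heq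
  exact heq.elim hcross.ne hcross.ne_apply

lemma injOn_chordRep (h : Innermost C x) : Set.InjOn (chordRep C) (Ioo x (C.1 x) : Finset _) :=
  fun t ht _ hu heq => (chordRep_eq_iff.1 heq).elim Eq.symm fun hut =>
    (h.2 t (mem_coe.1 ht) (hut ▸ mem_coe.1 hu)).elim

lemma extreme_curry_iff (h : Innermost C x) {ω : Fin (2 * n) × Fin (2 * n) → Bool} :
    Extreme (C, Function.curry ω) x ↔ CoinExtreme ω (Ioo x (C.1 x)) x (chordRep C) := by
  have hcross : ∀ t ∈ Ioo x (C.1 x), Crosses C x t := fun t ht => h.crosses_iff.2 (Or.inl ht)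
  have hover : ∀ t ∈ Ioo x (C.1 x),
      (OverD (C, Function.curry ω) x t ↔ CoinOver ω x (chordRep C t)) := fun t ht => by
    rw [overD_curry, h.chordRep_eq, and_iff_right (hcross t ht)]
  have hunder : ∀ t ∈ Ioo x (C.1 x),
      (OverD (C, Function.curry ω) t x ↔ CoinOver ω (chordRep C t) x) := fun t ht => by
    rw [overD_curry, h.chordRep_eq, and_iff_right (hcross t ht).symm]
  have hpoint : ∀ {P : Fin (2 * n) → Prop}, (∀ u, P (C.1 u) ↔ P u) → (∀ u, P u → Crosses C x u) →
      ((∀ u, ¬ P u) ↔ ∀ t ∈ Ioo x (C.1 x), ¬ P t) := fun hP hPx =>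
    ⟨fun H t _ => H t, fun H u hu => (h.crosses_iff.1 (hPx u hu)).elim (fun hu' => H u hu' hu)
      fun hu' => H _ hu' ((hP u).2 hu)⟩
  rw [Extreme, CoinExtreme, or_comm,
    hpoint (P := fun u => OverD _ u x) (fun _ => overD_left) fun u hu => hu.1.symm,
    hpoint (fun _ => overD_right) fun u hu => hu.1]
  refine or_congr (forall₂_congr fun t ht => ?_) (forall₂_congr fun t ht => ?_)
  · rw [hunder t ht, coinOver_comm (h.chordRep_ne ht).symm, not_not]
  · rw [hover t ht, coinOver_comm (h.chordRep_ne ht), not_not]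

end Innermost

lemma unifProb_forall_extreme {ι : Type*} [Fintype ι] {a : ι → Fin (2 * n)}
    (ha : Function.Injective a) (hin : ∀ k, Innermost C (a k))
    (hcross : ∀ k l, ¬ Crosses C (a k) (a l)) :
    unifProb (fun ω => ∀ k, Extreme (C, Function.curry ω) (a k)) =
      ∏ k, extremeProb (C.1 (a k) - a k - 1) := by
  have hrep : ∀ k l, ∀ t ∈ Ioo (a k) (C.1 (a k)), chordRep C t ≠ a l := fun k l t ht heq => by
    have hkt := (hin k).crosses_iff.2 (Or.inl ht)
    rw [← (hin l).chordRep_eq, eq_comm, chordRep_eq_iff] at heq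
    rcases heq with rfl | rfl
    · exact hcross k l hkt
    · exact hcross k l (crosses_right.1 hkt)
  calc _ = unifProb fun ω => ∀ k ∈ univ,
          CoinExtreme ω (Ioo (a k) (C.1 (a k))) (a k) (chordRep C) :=
        unifProb_congr fun ω => by simp only [(hin _).extreme_curry_iff, mem_univ, true_imp_iff]
    _ = ∏ k, unifProb fun ω => CoinExtreme ω (Ioo (a k) (C.1 (a k))) (a k) (chordRep C) := by
        refine unifProb_forall_mem_of_dependsOn univ (fun k _ => dependsOn_coinExtreme _ _ _)
          fun k _ l _ hkl => disjoint_coins (Set.disjoint_left.2 ?_)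
        rintro _ ⟨t, -, rfl⟩ ⟨u, hu, heq⟩
        rcases Sym2.eq_iff.1 heq with ⟨h, -⟩ | ⟨-, h⟩
        · exact hkl (ha h).symm
        · exact hrep l k u (mem_coe.1 hu) h
    _ = _ := prod_congr rfl fun k _ => by
        rw [unifProb_coinExtreme _ (hin k).injOn_chordRep fun t => (hin k).chordRep_ne,
          Fin.card_Ioo]

section DisjointArcs

variable {ι : Type*} {a b : ι → Fin (2 * n)}

lemma not_crosses_of_separated (hC : ∀ k, C.1 (a k) = b k) (hlt : ∀ k, a k < b k)
    (hsep : Pairwise fun k l => b k < a l ∨ b l < a k) (k l : ι) :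
    ¬ Crosses C (a k) (a l) := by
  rcases eq_or_ne k l with rfl | hkl
  · exact not_crosses_self
  · have := hsep hkl
    have := hlt k
    have := hlt l
    rw [crosses_iff, Between, Between, hC, hC]
    grind

variable [Fintype ι] {K : ℕ}

lemma unifProb_not_innermost_le (hlt : ∀ k, a k < b k) (hK : ∀ k, (b k : ℕ) ≤ a k + K)
    (hsep : Pairwise fun k l => b k < a l ∨ b l < a k) :
    unifProb (fun C : ChordDiagram n => (∀ k, C.1 (a k) = b k) ∧ ∃ k, ¬ Innermost C (a k)) ≤
      Fintype.card ι * K ^ 2 * chordProb (2 * n) (Fintype.card ι + 1) := by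
  set T : Finset (Σ _ : ι, Fin (2 * n) × Fin (2 * n)) :=
    univ.sigma fun k => Ioo (a k) (b k) ×ˢ Ioo (a k) (b k) with hT
  have hcard : (#T : ℝ) ≤ Fintype.card ι * K ^ 2 := by
    have hk : ∀ k ∈ univ, #(Ioo (a k) (b k) ×ˢ Ioo (a k) (b k)) ≤ K ^ 2 := fun k _ => by
      rw [card_product, Fin.card_Ioo, ← sq]
      exact Nat.pow_le_pow_left (by have := hK k; omega) 2
    have h : #T ≤ Fintype.card ι * K ^ 2 := by
      rw [hT, card_sigma]
      exact sum_le_card_nsmul _ _ _ hk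
    exact_mod_cast h
  refine (unifProb_le_card_mul_chordProb (ι := Option ι) T (a := fun t k => k.elim t.2.1 a)
    (b := fun t k => k.elim t.2.2 b) ?_ ?_).trans ?_
  · rintro ⟨k, p, q⟩ ht
    simp only [hT, mem_sigma, mem_univ, true_and, mem_product, mem_Ioo] at ht
    have hnew : ∀ l, s(a l, b l) ≠ s(p, q) := fun l h => by
      have hl := hlt l
      rcases eq_or_ne k l with rfl | hkl
      · grind [Sym2.eq_iff]
      · have := hsep hkl
        grind [Sym2.eq_iff]
    rintro (_ | l) (_ | m) h
    · rfl
    · exact (hnew m h.symm).elim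
    · exact (hnew l h).elim
    · refine congrArg some (not_not.1 fun hlm => ?_)
      have := hsep hlm
      have := hlt l
      grind [Sym2.eq_iff]
  · rintro C ⟨hC, k, hk⟩
    simp only [Innermost, hC, not_and, not_forall, not_not] at hk
    obtain ⟨t, ht, hCt⟩ := hk (hlt k)
    refine ⟨⟨k, t, C.1 t⟩, ?_, Option.rec rfl hC⟩
    rw [hT, mem_sigma, mem_product]
    exact ⟨mem_univ k, ht, hCt⟩
  · rw [Fintype.card_option]
    exact mul_le_mul_of_nonneg_right hcard (chordProb_nonneg _ _)

lemma abs_unifProb_forall_extreme_sub_le (hlt : ∀ k, a k < b k) (hK : ∀ k, (b k : ℕ) ≤ a k + K)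
    (hsep : Pairwise fun k l => b k < a l ∨ b l < a k) :
    |unifProb (fun D : OrientedChordDiagram n => ∀ k, D.1.1 (a k) = b k ∧ Extreme D (a k)) -
        chordProb (2 * n) (Fintype.card ι) * ∏ k, extremeProb (b k - a k - 1)| ≤
      Fintype.card ι * K ^ 2 * chordProb (2 * n) (Fintype.card ι + 1) := by
  have hdisj : Pairwise fun k l => Disjoint ({a k, b k} : Finset (Fin (2 * n))) {a l, b l} :=
    fun k l hkl => by
      have := hsep hkl
      have := hlt k
      have := hlt l
      simp only [disjoint_insert_left, disjoint_singleton_left, mem_insert, mem_singleton]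
      grind
  have hinj : Function.Injective a := fun k l h => not_not.1 fun hkl => by
    have := hsep hkl
    have := hlt k
    have := hlt l
    grind
  rw [← unifProb_forall_apply_eq (fun k => (hlt k).ne) hdisj, unifProb_orientedChordDiagram]
  refine le_trans ?_ (unifProb_not_innermost_le hlt hK hsep)
  rw [unifProb, unifProb, expect_mul, ← expect_sub_distrib]
  refine (abs_expect_le _ _).trans (expect_le_expect fun C _ => ?_)
  by_cases hC : ∀ k, C.1 (a k) = b k
  · simp only [hC, true_and, implies_true, if_true, one_mul]
    by_cases hin : ∀ k, Innermost C (a k)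
    · have h := unifProb_forall_extreme hinj hin (not_crosses_of_separated hC hlt hsep)
      simp only [hC] at h
      rw [h, sub_self, abs_zero]
      split_ifs <;> norm_num
    · rw [if_pos (not_forall.1 hin)]
      exact abs_sub_le_of_nonneg_of_le (unifProb_nonneg _) (unifProb_le_one _)
        (prod_nonneg fun _ _ => extremeProb_nonneg _)
        (prod_le_one (fun _ _ => extremeProb_nonneg _) fun _ _ => extremeProb_le_one _)
  · have hzero : unifProb (fun ω : Fin (2 * n) × Fin (2 * n) → Bool =>
        ∀ k, C.1 (a k) = b k ∧ Extreme (C, Function.curry ω) (a k)) = 0 := by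
      rw [← unifProb_false (Ω := Fin (2 * n) × Fin (2 * n) → Bool)]
      exact unifProb_congr fun ω => iff_false_intro fun h => hC fun k => (h k).1
    simp [hzero, hC]

end DisjointArcs

end Innermost

/-! ### Factorial moments of the number of extreme short chords -/

section FactorialMoments

lemma descFactorial_card_filter {X : Type*} [Fintype X] (P : X → Prop) [DecidablePred P]
    (r : ℕ) :
    (#{x | P x}).descFactorial r = #{s : Fin r → X | Function.Injective s ∧ ∀ k, P (s k)} := by
  rw [← Fintype.card_subtype, ← Fintype.card_subtype, ← Fintype.card_fin r,
    ← Fintype.card_embedding_eq, Fintype.card_fin]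
  exact Fintype.card_congr
    { toFun := fun f => ⟨fun k => f k, fun k l h => f.injective (Subtype.ext h), fun k => (f k).2⟩
      invFun := fun s => ⟨fun k => ⟨s.1 k, s.2.2 k⟩, fun k l h => s.2.1 (congrArg Subtype.val h)⟩ }

lemma expect_descFactorial_card_filter {Ω X : Type*} [Fintype Ω] [Fintype X] (P : Ω → X → Prop)
    [∀ ω, DecidablePred (P ω)] (r : ℕ) :
    𝔼 ω, ((#{x | P ω x}).descFactorial r : ℝ) =
      ∑ s : Fin r → X, unifProb fun ω => Function.Injective s ∧ ∀ k, P ω (s k) := by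
  simp only [unifProb, descFactorial_card_filter, natCast_card_filter]
  rw [expect_sum_comm]
  exact sum_congr rfl fun s _ => expect_congr rfl fun ω _ => by congr

variable {N K n r : ℕ}

/-- The intervals from `i` to `i + c + 1`, for the entries `(i, c)` of `s`, are contained in
`{0, …, N - 1}` and disjoint. -/
def Separated (s : Fin r → Fin N × Fin K) : Prop :=
  (∀ k, ((s k).1 : ℕ) + (s k).2 + 1 < N) ∧
    Pairwise fun k l =>
      ((s k).1 : ℕ) + (s k).2 + 1 < (s l).1 ∨ ((s l).1 : ℕ) + (s l).2 + 1 < (s k).1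

lemma unifProb_apply_fst_mem_near_le [NeZero N] [NeZero K] (l : Fin r)
    {p : (Fin r → Fin N × Fin K) → Fin N} (hp : ∀ s y, p (Function.update s l y) = p s) :
    unifProb (fun s => (s l).1 ∈ near K (p s)) ≤ (2 * K + 1) / N := by
  refine unifProb_le_of_update l fun s => ?_
  simp only [Function.update_self, hp]
  calc unifProb (fun y : Fin N × Fin K => y.1 ∈ near K (p s))
      = #(near K (p s)) / N := by
        have h := unifProb_prod fun y : Fin N × Fin K => y.1 ∈ near K (p s)
        simp only [unifProb_const] at h
        rw [h, expect_eq_sum_div_card, sum_boole, filter_mem_eq_inter, univ_inter, card_univ,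
          Fintype.card_fin]
    _ ≤ (2 * K + 1) / N := by
        gcongr
        exact_mod_cast card_near_le K (p s)

lemma unifProb_not_separated_le [NeZero N] [NeZero K] :
    unifProb (fun s : Fin r → Fin N × Fin K => ¬ Separated s) ≤
      (r + r ^ 2) * ((2 * K + 1) / N) := by
  have hN := NeZero.pos N
  let e : Fin N := ⟨N - 1, by omega⟩
  calc _ ≤ unifProb fun s : Fin r → Fin N × Fin K => (∃ l ∈ univ, (s l).1 ∈ near K e) ∨
          ∃ z ∈ (univ : Finset (Fin r)).offDiag, (s z.1).1 ∈ near K (s z.2).1 := by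
        refine unifProb_mono fun s hs => ?_
        contrapose! hs
        simp only [mem_univ, true_imp_iff, mem_offDiag, mem_near, e] at hs
        refine ⟨fun k => ?_, fun k l hkl => ?_⟩
        · have := hs.1 k
          omega
        · have := hs.2 (k, l) ⟨trivial, trivial, hkl⟩
          dsimp only at this
          omega
    _ ≤ ∑ l : Fin r, ((2 * K + 1) / N : ℝ) +
          ∑ z ∈ (univ : Finset (Fin r)).offDiag, ((2 * K + 1) / N : ℝ) := by
        refine (unifProb_or_le _ _).trans (add_le_add
          ((unifProb_exists_le_sum _ _).trans (sum_le_sum fun l _ => ?_))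
          ((unifProb_exists_le_sum _ _).trans (sum_le_sum fun z hz => ?_)))
        · exact unifProb_apply_fst_mem_near_le l fun _ _ => rfl
        · exact unifProb_apply_fst_mem_near_le z.1 fun s y => by
            rw [Function.update_of_ne (mem_offDiag.1 hz).2.2.symm]
    _ ≤ _ := by
        rw [sum_const, sum_const, ← add_nsmul, nsmul_eq_mul]
        gcongr
        rw [offDiag_card, card_univ, Fintype.card_fin, ← sq]
        exact_mod_cast Nat.add_le_add_left (Nat.sub_le _ _) _

/-- The event that the entries of `s` are distinct and contribute to `shortExtremeCount K D`. -/
def AllExtreme (s : Fin r → Fin (2 * n) × Fin K) (D : OrientedChordDiagram n) : Prop :=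
  Function.Injective s ∧ ∀ k, (D.1.1 (s k).1 : ℕ) = (s k).1 + (s k).2 + 1 ∧ Extreme D (s k).1

lemma unifProb_allExtreme_le (s : Fin r → Fin (2 * n) × Fin K) :
    unifProb (AllExtreme s) ≤ chordProb (2 * n) r := by
  by_cases h : Function.Injective s ∧ ∀ k, ((s k).1 : ℕ) + (s k).2 + 1 < 2 * n
  · have hab : Function.Injective fun k => s((s k).1, ⟨(s k).1 + (s k).2 + 1, h.2 k⟩) :=
      fun k l hkl => h.1 (by grind [Sym2.eq_iff])
    have hle := unifProb_forall_apply_eq_le hab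
    rw [Fintype.card_fin] at hle
    refine le_trans ?_ hle
    rw [← unifProb_fst fun C => ∀ k, C.1 (s k).1 = ⟨(s k).1 + (s k).2 + 1, h.2 k⟩]
    exact unifProb_mono fun D hD k => Fin.ext (hD.2 k).1
  · have hfalse : ∀ D, ¬ AllExtreme s D := fun D hD => h ⟨hD.1, fun k => by
      have := (hD.2 k).1
      omega⟩
    rw [unifProb_congr fun D => iff_false_intro (hfalse D), unifProb_false]
    exact chordProb_nonneg _ _

lemma abs_unifProb_allExtreme_sub_le {s : Fin r → Fin (2 * n) × Fin K} (hs : Separated s) :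
    |unifProb (AllExtreme s) - chordProb (2 * n) r * ∏ k, extremeProb (s k).2| ≤
      r * K ^ 2 * chordProb (2 * n) (r + 1) := by
  have h := abs_unifProb_forall_extreme_sub_le (a := fun k => (s k).1)
    (b := fun k => ⟨(s k).1 + (s k).2 + 1, hs.1 k⟩) (K := K) (fun k => Fin.lt_def.2 (by grind))
    (fun k => by grind) fun k l hkl => by simpa only [Fin.lt_def] using hs.2 hkl
  have hspan : ∀ k, ((s k).1 + (s k).2 + 1 - (s k).1 - 1 : ℕ) = (s k).2 := fun k => by omega
  have hinj : Function.Injective s := fun k l h => not_not.1 fun hkl => by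
    have := hs.2 hkl
    grind
  simp only [Fintype.card_fin, Fin.ext_iff, hspan] at h
  rwa [unifProb_congr (F := AllExtreme s) fun D => (and_iff_right hinj).symm] at h

lemma abs_unifProb_allExtreme_sub_le_add_ite (s : Fin r → Fin (2 * n) × Fin K) :
    |unifProb (AllExtreme s) - chordProb (2 * n) r * ∏ k, extremeProb (s k).2| ≤
      r * K ^ 2 * chordProb (2 * n) (r + 1) +
        (if ¬ Separated s then 1 else 0) * chordProb (2 * n) r := by
  have hr := chordProb_nonneg (2 * n) r
  have hr' := chordProb_nonneg (2 * n) (r + 1)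
  by_cases hs : Separated s
  · simpa [hs] using abs_unifProb_allExtreme_sub_le hs
  · rw [if_pos hs, one_mul]
    refine (abs_sub_le_of_nonneg_of_le (unifProb_nonneg _) (unifProb_allExtreme_le s)
      (mul_nonneg hr (prod_nonneg fun _ _ => extremeProb_nonneg _))
      (mul_le_of_le_one_right hr (prod_le_one (fun _ _ => extremeProb_nonneg _)
        fun _ _ => extremeProb_le_one _))).trans (le_add_of_nonneg_left (by positivity))

lemma sum_prod_extremeProb :
    ∑ s : Fin r → Fin N × Fin K, ∏ k, extremeProb (s k).2 =
      (N * ∑ c ∈ range K, extremeProb c) ^ r := by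
  rw [← Fintype.sum_pow fun y : Fin N × Fin K => extremeProb y.2]
  simp only [Fintype.sum_prod_type, sum_const, card_univ, Fintype.card_fin, nsmul_eq_mul,
    Fin.sum_univ_eq_sum_range extremeProb]

lemma expect_descFactorial_shortExtremeCount :
    𝔼 D : OrientedChordDiagram n, ((shortExtremeCount K D).descFactorial r : ℝ) =
      ∑ s : Fin r → Fin (2 * n) × Fin K, unifProb (AllExtreme s) :=
  expect_descFactorial_card_filter (fun (D : OrientedChordDiagram n) (y : Fin (2 * n) × Fin K) =>
    (D.1.1 y.1 : ℕ) = y.1 + y.2 + 1 ∧ Extreme D y.1) r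

lemma abs_expect_descFactorial_sub_le [NeZero n] [NeZero K] (r : ℕ) :
    |𝔼 D : OrientedChordDiagram n, ((shortExtremeCount K D).descFactorial r : ℝ) -
        chordProb (2 * n) r * ((2 * n : ℕ) * ∑ c ∈ range K, extremeProb c) ^ r| ≤
      ((2 * n : ℕ) * K) ^ r * (r * K ^ 2 * chordProb (2 * n) (r + 1) +
        (r + r ^ 2) * ((2 * K + 1) / (2 * n : ℕ)) * chordProb (2 * n) r) := by
  rw [expect_descFactorial_shortExtremeCount, ← sum_prod_extremeProb, mul_sum, ← sum_sub_distrib]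
  calc _ ≤ ∑ s : Fin r → Fin (2 * n) × Fin K, (r * K ^ 2 * chordProb (2 * n) (r + 1) +
          (if ¬ Separated s then 1 else 0) * chordProb (2 * n) r) :=
        (abs_sum_le_sum_abs _ _).trans
          (sum_le_sum fun s _ => abs_unifProb_allExtreme_sub_le_add_ite s)
    _ = ((2 * n : ℕ) * K) ^ r * (r * K ^ 2 * chordProb (2 * n) (r + 1) +
          unifProb (fun s : Fin r → Fin (2 * n) × Fin K => ¬ Separated s) *
            chordProb (2 * n) r) := by
        have hcard : (Fintype.card (Fin r → Fin (2 * n) × Fin K) : ℝ) = ((2 * n : ℕ) * K) ^ r := by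
          simp
        rw [unifProb, sum_add_distrib, sum_const, ← sum_mul, card_univ, ← Fintype.card_smul_expect,
          nsmul_eq_mul, nsmul_eq_mul, hcard, mul_add, mul_assoc _ (𝔼 _, _)]
        congr!
    _ ≤ _ := by
        gcongr
        · exact chordProb_nonneg _ _
        · exact unifProb_not_separated_le

lemma tendsto_expect_descFactorial_shortExtremeCount (K r : ℕ) [NeZero K] :
    Tendsto (fun n => 𝔼 D : OrientedChordDiagram n, ((shortExtremeCount K D).descFactorial r : ℝ))
      atTop (𝓝 ((∑ c ∈ range K, extremeProb c) ^ r)) := by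
  have hmain := (tendsto_chordProb_mul_pow r).mul_const ((∑ c ∈ range K, extremeProb c) ^ r)
  have hinv : Tendsto (fun n : ℕ => (2 * n : ℝ)⁻¹) atTop (𝓝 0) :=
    tendsto_inv_atTop_zero.comp (tendsto_natCast_atTop_atTop.const_mul_atTop two_pos)
  have herr := (((tendsto_chordProb_mul_pow (r + 1)).const_mul (r * K ^ 2 : ℝ)).add
    ((tendsto_chordProb_mul_pow r).const_mul ((r + r ^ 2) * (2 * K + 1) : ℝ))).const_mul
      (K ^ r : ℝ) |>.mul hinv
  rw [one_mul] at hmain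
  rw [mul_zero] at herr
  refine (tendsto_iff_of_dist (squeeze_zero' (.of_forall fun _ => dist_nonneg) ?_ herr)).1 hmain
  filter_upwards [eventually_gt_atTop 0] with n hn
  have : NeZero n := ⟨hn.ne'⟩
  have hn' : (n : ℝ) ≠ 0 := NeZero.ne _
  rw [dist_comm, Real.dist_eq, mul_assoc, ← mul_pow]
  refine le_of_le_of_eq (by simpa only [Nat.cast_mul, Nat.cast_ofNat] using
    abs_expect_descFactorial_sub_le r) ?_
  rw [mul_pow, pow_succ]
  field_simp
  ring

lemma tendsto_unifProb_shortExtremeCount_eq (K m : ℕ) [NeZero K] :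
    Tendsto (fun n => unifProb fun D : OrientedChordDiagram n => shortExtremeCount K D = m) atTop
      (𝓝 (Real.exp (-∑ c ∈ range K, extremeProb c) * (∑ c ∈ range K, extremeProb c) ^ m /
        m.factorial)) :=
  tendsto_unifProb_eq_of_tendsto_descFactorial _ _
    (fun r => tendsto_expect_descFactorial_shortExtremeCount K r) m

end FactorialMoments

/-! ### Single components and the giant component -/

section Limits

lemma tendsto_unifProb_singleCount_eq (m : ℕ) :
    Tendsto (fun n => unifProb fun D : OrientedChordDiagram n => singleCount n D = m) atTop
      (𝓝 (Real.exp (-3) * 3 ^ m / m.factorial)) := by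
  have hcont : Continuous fun l : ℝ => Real.exp (-l) * l ^ m / m.factorial := by fun_prop
  refine tendsto_of_eventually_dist_le (k := atTop)
    (b := fun K n => unifProb fun D : OrientedChordDiagram n => shortExtremeCount K D = m)
    ?_ ((hcont.tendsto 3).comp tendsto_sum_range_extremeProb) fun ε hε => ?_
  · filter_upwards [eventually_gt_atTop 0] with K hK
    have : NeZero K := ⟨hK.ne'⟩
    exact tendsto_unifProb_shortExtremeCount_eq K m
  · filter_upwards [eventually_eventually_unifProb_not_isTypical_le hε] with K hK
    filter_upwards [hK] with n hn
    refine (abs_unifProb_sub_le fun D hD => ?_).trans hn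
    obtain ⟨o, ho⟩ := not_not.1 hD
    rw [ho.singleCount_eq]

lemma tendsto_unifProb_exists_unique_largeComponent :
    Tendsto (fun n => unifProb fun D : OrientedChordDiagram n => (∃ x, InLargeComponent D x) ∧
      ∀ x y, InLargeComponent D x → InLargeComponent D y → MutualReach D x y) atTop (𝓝 1) := by
  refine tendsto_of_eventually_dist_le (k := atTop) (b := fun (_ n : ℕ) => unifProb fun
    _ : OrientedChordDiagram n => True) (B := fun _ => 1) ?_ tendsto_const_nhds fun ε hε => ?_
  · simp only [unifProb_true, tendsto_const_nhds, eventually_true]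
  · filter_upwards [eventually_eventually_unifProb_not_isTypical_le hε] with K hK
    filter_upwards [hK] with n hn
    refine (abs_unifProb_sub_le fun D hD => ?_).trans hn
    obtain ⟨o, ho⟩ := not_not.1 hD
    exact iff_true_intro ⟨ho.exists_inLargeComponent,
      fun _ _ => ho.mutualReach_of_inLargeComponent⟩

end Limits

theorem stmt17 :
    (∀ m : ℕ,
      Filter.Tendsto
        (fun n : ℕ => probD n (fun D => singleCount n D = m))
        Filter.atTop (nhds (Real.exp (-3) * 3^m / (m.factorial : ℝ)))) ∧
    Filter.Tendsto
      (fun n : ℕ => probD n (fun D =>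
        (∃ x u : Fin (2*n), u ≠ x ∧ u ≠ D.1.1 x ∧ MutualReach D x u) ∧
        ∀ x y : Fin (2*n),
          (∃ u, u ≠ x ∧ u ≠ D.1.1 x ∧ MutualReach D x u) →
          (∃ v, v ≠ y ∧ v ≠ D.1.1 y ∧ MutualReach D y v) →
          MutualReach D x y))
      Filter.atTop (nhds 1) := by
  simp only [probD_eq_unifProb]
  exact ⟨tendsto_unifProb_singleCount_eq, tendsto_unifProb_exists_unique_largeComponent⟩
end

section
/- Let α(C_n) denote the independence number of the uniformly random chord diagram C_n, i.e., the largest cardinality of a set of pairwise non-crossing chords of C_n. Then with high probability α(C_n) ≤ e·√(2n); that is, P(C_n contains a set of ⌈e√(2n)⌉ pairwise non-crossing chords) → 0 as n→∞. -/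
open scoped Classical
open Finset Filter

/-!
This is a first moment argument. A noncrossing set of `k` chords is determined by its `2k`
endpoints together with the `k` left endpoints among them, just as a balanced bracket word is
determined by the positions of its opening brackets, and the remaining `2(n - k)` points can be
matched in `(2(n - k) - 1)!!` ways. Hence the expected number of such sets is at most
`(2n).choose (2k) * (2k).choose k * (2(n - k) - 1)!! / (2n - 1)!! = n.choose k * 2 ^ k / k!`,
which is at most `(2n) ^ k / (k!) ^ 2`. By Stirling's lower bound
`√(2πk) (k / e) ^ k ≤ k!`, this is at most `1 / (2πk)` as soon as `e √(2n) ≤ k`.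
-/

section FixedPointFreeInvolution

/-- Fixed-point-free involutions of `α`, i.e. perfect matchings of its elements.
`ChordDiagram n` unfolds to `FixedPointFreeInvolution (Fin (2 * n))`; other types `α` are needed
for the chords that remain after some of the endpoints have been removed. -/
abbrev FixedPointFreeInvolution (α : Type*) :=
  {f : α → α // (∀ i, f (f i) = i) ∧ ∀ i, f i ≠ i}

variable {α : Type*}

/-- The fixed-point-free involution induced on an invariant subset, given by a predicate `p`. -/
def FixedPointFreeInvolution.restrict (f : FixedPointFreeInvolution α) {p : α → Prop}
    (hp : ∀ x, p x → p (f.1 x)) : FixedPointFreeInvolution {x // p x} :=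
  ⟨Subtype.map f.1 hp, fun x => Subtype.ext (f.2.1 x),
    fun x hx => f.2.2 x (congrArg Subtype.val hx)⟩

theorem cycleType_eq_replicate_two_iff [Fintype α] [DecidableEq α] {m : ℕ}
    (hα : Fintype.card α = 2 * m) (g : Equiv.Perm α) :
    g.cycleType = Multiset.replicate m 2 ↔ (∀ x, g (g x) = x) ∧ ∀ x, g x ≠ x := by
  have involutive_iff : (∀ x, g (g x) = x) ↔ ∀ c ∈ g.cycleType, c = 2 := by
    rw [← Equiv.Perm.pow_prime_eq_one_iff, sq, Equiv.ext_iff]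
    rfl
  have fixedPointFree_iff : (∀ x, g x ≠ x) ↔ g.cycleType.sum = 2 * m := by
    rw [Equiv.Perm.sum_cycleType, ← hα, Finset.card_eq_iff_eq_univ, Finset.eq_univ_iff_forall]
    simp only [Equiv.Perm.mem_support]
  rw [involutive_iff, fixedPointFree_iff, Multiset.eq_replicate, and_comm]
  refine and_congr_right fun h => ?_
  rw [Multiset.eq_replicate_of_mem h, Multiset.sum_replicate, Multiset.card_replicate, smul_eq_mul]
  lia

/-- A fixed-point-free involution viewed as a permutation, to be counted by cycle type. -/
def fixedPointFreeInvolutionEquivPerm (α : Type*) :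
    FixedPointFreeInvolution α ≃
      {g : Equiv.Perm α // (∀ x, g (g x) = x) ∧ ∀ x, g x ≠ x} where
  toFun f := ⟨Function.Involutive.toPerm f.1 f.2.1, f.2⟩
  invFun g := ⟨g.1, g.2⟩
  left_inv _ := rfl
  right_inv _ := Subtype.ext (Equiv.ext fun _ => rfl)

theorem natCard_fixedPointFreeInvolution_mul [Finite α] {m : ℕ} (hα : Nat.card α = 2 * m) :
    Nat.card (FixedPointFreeInvolution α) * (2 ^ m * m.factorial) = (2 * m).factorial := by
  have := Fintype.ofFinite α
  rw [Nat.card_eq_fintype_card] at hα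
  have sum_eq : (Multiset.replicate m 2).sum = 2 * m := by
    rw [Multiset.sum_replicate, smul_eq_mul, mul_comm]
  have prod_factorial_count :
      ∏ c ∈ (Multiset.replicate m 2).toFinset, ((Multiset.replicate m 2).count c).factorial =
        m.factorial := by
    rcases eq_or_ne m 0 with rfl | hm
    · simp
    · simp [Multiset.toFinset_replicate, hm]
  have card_mul := Equiv.Perm.card_of_cycleType_mul_eq α (Multiset.replicate m 2)
  rw [if_pos ⟨(sum_eq.trans hα.symm).le, fun c hc => (Multiset.eq_of_mem_replicate hc).ge⟩,
    sum_eq, hα, Nat.sub_self, Nat.factorial_zero, one_mul, Multiset.prod_replicate,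
    prod_factorial_count] at card_mul
  rw [← card_mul, Nat.card_congr (fixedPointFreeInvolutionEquivPerm α)]
  congr 1
  exact Nat.subtype_card _ fun g => by
    rw [Finset.mem_filter_univ, cycleType_eq_replicate_two_iff hα]

theorem cast_natCard_fixedPointFreeInvolution [Finite α] {m : ℕ} (hα : Nat.card α = 2 * m) :
    (Nat.card (FixedPointFreeInvolution α) : ℝ) =
      (2 * m).factorial / (2 ^ m * m.factorial) := by
  rw [eq_div_iff (by positivity)]
  exact_mod_cast natCard_fixedPointFreeInvolution_mul hα

theorem natCard_fixedPointFreeInvolution_congr {β : Type*} [Finite α] [Finite β] {m : ℕ}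
    (hα : Nat.card α = 2 * m) (hβ : Nat.card β = 2 * m) :
    Nat.card (FixedPointFreeInvolution α) = Nat.card (FixedPointFreeInvolution β) := by
  rw [← Nat.cast_inj (R := ℝ), cast_natCard_fixedPointFreeInvolution hα,
    cast_natCard_fixedPointFreeInvolution hβ]

end FixedPointFreeInvolution

section Noncrossing

variable {n k : ℕ} {C D : ChordDiagram n} {S : Finset (Fin (2 * n))}

/-- `S` is the set of endpoints of pairwise noncrossing chords of `C`. -/
structure NoncrossingOn (C : ChordDiagram n) (S : Finset (Fin (2 * n))) : Prop where
  apply_mem : ∀ x ∈ S, C.1 x ∈ S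
  not_crosses : ∀ x ∈ S, ∀ u ∈ S, ¬ Crosses C x u

/-- `C` contains `k` pairwise noncrossing chords, i.e. its independence number is at least `k`.
The set of chords is encoded by the set of its `2 * k` endpoints. -/
def HasNoncrossing (C : ChordDiagram n) (k : ℕ) : Prop :=
  ∃ S : Finset (Fin (2 * n)),
    (∀ x ∈ S, C.1 x ∈ S) ∧ #S = 2 * k ∧ ∀ x ∈ S, ∀ u ∈ S, ¬ Crosses C x u

/-- The points of `S` at which a chord of `C` starts; together with `S` they determine every
noncrossing set of chords with endpoint set `S`. -/
def leftEndpoints (C : ChordDiagram n) (S : Finset (Fin (2 * n))) : Finset (Fin (2 * n)) :=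
  {x ∈ S | x < C.1 x}

theorem mem_leftEndpoints {x : Fin (2 * n)} : x ∈ leftEndpoints C S ↔ x ∈ S ∧ x < C.1 x :=
  Finset.mem_filter

namespace NoncrossingOn

theorem apply_notMem (hC : NoncrossingOn C S) {x : Fin (2 * n)} (hx : x ∉ S) : C.1 x ∉ S :=
  fun h => hx (C.2.1 x ▸ hC.apply_mem _ h)

theorem card_leftEndpoints (hC : NoncrossingOn C S) (hS : #S = 2 * k) :
    #(leftEndpoints C S) = k := by
  have card_right : #{x ∈ S | ¬ x < C.1 x} = #(leftEndpoints C S) :=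
    Finset.card_bij' (fun x _ => C.1 x) (fun x _ => C.1 x)
      (by grind [hC.apply_mem, mem_leftEndpoints, C.2.1, C.2.2])
      (by grind [hC.apply_mem, mem_leftEndpoints, C.2.1, C.2.2])
      (fun x _ => C.2.1 x) (fun x _ => C.2.1 x)
  have card_add : #(leftEndpoints C S) + #{x ∈ S | ¬ x < C.1 x} = #S :=
    Finset.card_filter_add_card_filter_not _
  lia

theorem apply_mem_Ioo (hC : NoncrossingOn C S) {x u : Fin (2 * n)} (hx : x ∈ S) (hu : u ∈ S)
    (hu' : u ∈ Set.Ioo x (C.1 x)) : C.1 u ∈ Set.Ioo x (C.1 x) := by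
  have hlt : x < C.1 x := hu'.1.trans hu'.2
  have h := hC.not_crosses x hx u hu
  simp only [Crosses, Between, min_eq_left hlt.le, max_eq_right hlt.le] at h
  by_contra hout
  exact h (Or.inl ⟨hu', hout⟩)

theorem apply_le_apply (hC : NoncrossingOn C S) (hD : NoncrossingOn D S)
    (h : leftEndpoints D S ⊆ leftEndpoints C S) {x : Fin (2 * n)} (hx : x ∈ leftEndpoints C S) :
    D.1 x ≤ C.1 x := by
  -- If `C.1 x < D.1 x`, the chord of `D` ending at `y = C.1 x` starts at some `z` in `(x, y)`.
  -- By induction `y ≤ C.1 z`, so the chord of `C` at `z` leaves `(x, y)`: a crossing.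
  induction x using WellFoundedGT.induction with
  | ind x ih =>
    by_contra! hlt
    obtain ⟨hxS, hxy⟩ := mem_leftEndpoints.1 hx
    have hyS : C.1 x ∈ S := hC.apply_mem x hxS
    have hCy : C.1 (C.1 x) = x := C.2.1 x
    have hzS : D.1 (C.1 x) ∈ S := hD.apply_mem _ hyS
    have hDz : D.1 (D.1 (C.1 x)) = C.1 x := D.2.1 _
    have hDy : D.1 (C.1 x) ≠ C.1 x := D.2.2 _
    set y := C.1 x
    set z := D.1 y
    have hzy : z < y := by
      refine hDy.lt_or_gt.resolve_right fun hyz => ?_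
      have hyC : y < C.1 y := (mem_leftEndpoints.1 (h (mem_leftEndpoints.2 ⟨hyS, hyz⟩))).2
      exact hyC.not_gt (hCy ▸ hxy)
    have hxz : x < z := (hD.apply_mem_Ioo hxS hyS ⟨hxy, hlt⟩).1
    have hz : z ∈ leftEndpoints C S := h (mem_leftEndpoints.2 ⟨hzS, hDz ▸ hzy⟩)
    have hyCz : y ≤ C.1 z := hDz ▸ ih z hxz hz
    exact hyCz.not_gt (hC.apply_mem_Ioo hxS hzS ⟨hxz, hzy⟩).2

theorem eqOn_of_leftEndpoints_eq (hC : NoncrossingOn C S) (hD : NoncrossingOn D S)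
    (h : leftEndpoints C S = leftEndpoints D S) : Set.EqOn C.1 D.1 S := by
  have eq_of_mem_left : ∀ x ∈ leftEndpoints C S, C.1 x = D.1 x := fun x hx =>
    (hD.apply_le_apply hC h.subset (h ▸ hx)).antisymm (hC.apply_le_apply hD h.superset hx)
  intro x hx
  rcases (C.2.2 x).lt_or_gt with hlt | hlt
  · have hCx : C.1 x ∈ leftEndpoints C S :=
      mem_leftEndpoints.2 ⟨hC.apply_mem x hx, by rwa [C.2.1]⟩
    have hDCx : D.1 (C.1 x) = x := by rw [← eq_of_mem_left _ hCx, C.2.1]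
    rw [← D.2.1 (C.1 x), hDCx]
  · exact eq_of_mem_left x (mem_leftEndpoints.2 ⟨hx, hlt⟩)

end NoncrossingOn

theorem card_noncrossingOn_le (hS : #S = 2 * k) :
    #{C : ChordDiagram n | NoncrossingOn C S} ≤
      (2 * k).choose k * Nat.card (FixedPointFreeInvolution {x // x ∉ S}) := by
  let code : {C : ChordDiagram n // NoncrossingOn C S} →
      Finset.powersetCard k S × FixedPointFreeInvolution {x // x ∉ S} := fun C =>
    (⟨leftEndpoints C.1 S, Finset.mem_powersetCard.2
      ⟨Finset.filter_subset _ _, C.2.card_leftEndpoints hS⟩⟩,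
      FixedPointFreeInvolution.restrict C.1 fun _ => C.2.apply_notMem)
  have code_injective : Function.Injective code := by
    intro C D hCD
    obtain ⟨left_eq, restrict_eq⟩ := Prod.ext_iff.1 hCD
    refine Subtype.ext (Subtype.ext (funext fun x => ?_))
    by_cases hx : x ∈ S
    · exact C.2.eqOn_of_leftEndpoints_eq D.2 (congrArg Subtype.val left_eq) hx
    · exact congrArg Subtype.val (congrFun (congrArg Subtype.val restrict_eq) ⟨x, hx⟩)
  calc #{C : ChordDiagram n | NoncrossingOn C S}
      = Nat.card {C : ChordDiagram n // NoncrossingOn C S} :=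
        (Nat.subtype_card _ fun _ => Finset.mem_filter_univ _).symm
    _ ≤ Nat.card (Finset.powersetCard k S × FixedPointFreeInvolution {x // x ∉ S}) :=
        Nat.card_le_card_of_injective code code_injective
    _ = (2 * k).choose k * Nat.card (FixedPointFreeInvolution {x // x ∉ S}) := by
        rw [Nat.card_prod, Nat.card_eq_finsetCard, Finset.card_powersetCard, hS]

theorem card_hasNoncrossing_le (n k : ℕ) :
    #{C : ChordDiagram n | HasNoncrossing C k} ≤
      (2 * n).choose (2 * k) * ((2 * k).choose k * Nat.card (ChordDiagram (n - k))) := by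
  have subset_biUnion : ({C | HasNoncrossing C k} : Finset (ChordDiagram n)) ⊆
      (Finset.powersetCard (2 * k) Finset.univ).biUnion fun S => {C | NoncrossingOn C S} := by
    intro C hC
    obtain ⟨S, apply_mem, hS, not_crosses⟩ := (Finset.mem_filter_univ C).1 hC
    exact Finset.mem_biUnion.2 ⟨S, Finset.mem_powersetCard_univ.2 hS,
      (Finset.mem_filter_univ C).2 ⟨apply_mem, not_crosses⟩⟩
  have card_le : ∀ S ∈ Finset.powersetCard (2 * k) (Finset.univ : Finset (Fin (2 * n))),
      #{C : ChordDiagram n | NoncrossingOn C S} ≤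
        (2 * k).choose k * Nat.card (ChordDiagram (n - k)) := by
    intro S hS
    rw [Finset.mem_powersetCard_univ] at hS
    have card_compl : Nat.card {x // x ∉ S} = 2 * (n - k) := by
      rw [Nat.card_eq_fintype_card, Fintype.card_subtype_compl, Fintype.card_coe, hS,
        Fintype.card_fin, Nat.mul_sub]
    have card_remaining : Nat.card (FixedPointFreeInvolution {x // x ∉ S}) =
        Nat.card (ChordDiagram (n - k)) :=
      natCard_fixedPointFreeInvolution_congr card_compl (Nat.card_fin _)
    exact card_remaining ▸ card_noncrossingOn_le hS
  calc #{C : ChordDiagram n | HasNoncrossing C k}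
      ≤ #(Finset.powersetCard (2 * k) (Finset.univ : Finset (Fin (2 * n)))) *
          ((2 * k).choose k * Nat.card (ChordDiagram (n - k))) :=
        (Finset.card_le_card subset_biUnion).trans
          (Finset.card_biUnion_le_card_mul _ _ _ card_le)
    _ = (2 * n).choose (2 * k) * ((2 * k).choose k * Nat.card (ChordDiagram (n - k))) := by
        rw [Finset.card_powersetCard, Finset.card_univ, Fintype.card_fin]

end Noncrossing

section Asymptotics

theorem choose_mul_choose_mul_natCard_chordDiagram (n k : ℕ) :
    ((2 * n).choose (2 * k) * ((2 * k).choose k * Nat.card (ChordDiagram (n - k))) : ℝ) =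
      n.choose k * 2 ^ k / k.factorial * Nat.card (ChordDiagram n) := by
  rcases lt_or_ge n k with hk | hk
  · simp [Nat.choose_eq_zero_of_lt hk, Nat.choose_eq_zero_of_lt (show 2 * n < 2 * k by lia)]
  obtain ⟨m, rfl⟩ := Nat.exists_eq_add_of_le hk
  rw [cast_natCard_fixedPointFreeInvolution (Nat.card_fin _),
    cast_natCard_fixedPointFreeInvolution (Nat.card_fin _),
    Nat.cast_choose ℝ (by lia : 2 * k ≤ 2 * (k + m)), Nat.cast_choose ℝ (by lia : k ≤ 2 * k),
    Nat.cast_choose ℝ hk, ← Nat.mul_sub, Nat.add_sub_cancel_left, two_mul k, Nat.add_sub_cancel,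
    pow_add]
  field_simp

theorem prob_hasNoncrossing_le (n k : ℕ) :
    prob n (HasNoncrossing · k) ≤ n.choose k * 2 ^ k / k.factorial := by
  rw [prob, Finset.card_univ, ← Nat.card_eq_fintype_card]
  refine div_le_of_le_mul₀ (by positivity) (by positivity) ?_
  rw [← choose_mul_choose_mul_natCard_chordDiagram]
  exact_mod_cast card_hasNoncrossing_le n k

theorem pow_div_sq_factorial_le {k : ℕ} (hk : 0 < k) {x : ℝ} (hx : 0 ≤ x)
    (hxk : Real.exp 1 * √x ≤ k) :
    x ^ k / (k.factorial : ℝ) ^ 2 ≤ (2 * Real.pi * k)⁻¹ := by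
  have x_le : x ≤ (k / Real.exp 1) ^ 2 := by
    rw [← Real.sqrt_le_left (by positivity), le_div_iff₀' (Real.exp_pos 1)]
    exact hxk
  have pow_mul_le : x ^ k * (2 * Real.pi * k) ≤ (k.factorial : ℝ) ^ 2 :=
    calc x ^ k * (2 * Real.pi * k)
        ≤ ((k / Real.exp 1) ^ 2) ^ k * (2 * Real.pi * k) := by gcongr
      _ = (√(2 * Real.pi * k) * (k / Real.exp 1) ^ k) ^ 2 := by
          rw [mul_pow, Real.sq_sqrt (by positivity), pow_right_comm, mul_comm]
      _ ≤ (k.factorial : ℝ) ^ 2 := by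
          gcongr
          exact Stirling.le_factorial_stirling k
  rwa [div_le_iff₀ (by positivity), ← div_eq_inv_mul, le_div_iff₀ (by positivity)]

theorem prob_hasNoncrossing_le_inv {n k : ℕ} (hk : 0 < k) (hnk : Real.exp 1 * √(2 * n) ≤ k) :
    prob n (HasNoncrossing · k) ≤ (2 * Real.pi * k)⁻¹ :=
  calc prob n (HasNoncrossing · k)
      ≤ n.choose k * 2 ^ k / k.factorial := prob_hasNoncrossing_le n k
    _ ≤ n ^ k / k.factorial * 2 ^ k / k.factorial := by
        gcongr
        exact Nat.choose_le_pow_div k n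
    _ = (2 * n) ^ k / (k.factorial : ℝ) ^ 2 := by ring
    _ ≤ (2 * Real.pi * k)⁻¹ := pow_div_sq_factorial_le hk (by positivity) hnk

end Asymptotics

theorem stmt19 :
    Filter.Tendsto
      (fun n : ℕ => prob n (fun C =>
        ∃ S : Finset (Fin (2*n)),
          (∀ x ∈ S, C.1 x ∈ S) ∧
          S.card = 2 * ⌈Real.exp 1 * Real.sqrt (2*n)⌉₊ ∧
          ∀ x ∈ S, ∀ u ∈ S, ¬ Crosses C x u))
      Filter.atTop (nhds 0) := by
  have ceil_atTop : Tendsto (fun n : ℕ => ⌈Real.exp 1 * √(2 * n)⌉₊) atTop atTop :=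
    tendsto_nat_ceil_atTop.comp <| (Real.tendsto_sqrt_atTop.comp <|
      tendsto_natCast_atTop_atTop.const_mul_atTop two_pos).const_mul_atTop (Real.exp_pos 1)
  have bound_tendsto :
      Tendsto (fun n : ℕ => (2 * Real.pi * ⌈Real.exp 1 * √(2 * n)⌉₊)⁻¹) atTop (nhds 0) :=
    ((tendsto_natCast_atTop_atTop.comp ceil_atTop).const_mul_atTop
      Real.two_pi_pos).inv_tendsto_atTop
  refine squeeze_zero' (Eventually.of_forall fun n => ?_) ?_ bound_tendsto
  · exact div_nonneg (Nat.cast_nonneg _) (Nat.cast_nonneg _)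
  · filter_upwards [ceil_atTop.eventually_gt_atTop 0] with n hn
    exact prob_hasNoncrossing_le_inv hn (Nat.le_ceil _)
end
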